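/- arXiv:2112.15101 — 4 statements merged into one kernel-verified Lean document; each statement's English description precedes it below -/
import Mathlib

section
/- Let m ≥ 2 be an integer and let q < 2^{m−1}. Then there exist Δ > 1, exponents p_j ∈ (q, ∞] for j ∈ 𝒞 with ∑_{j∈𝒞} 1/p_j = 1, a real m×2m matrix Π such that Π_j Π^T is Δ-regular for every j ∈ 𝒞, and a Calderón–Zygmund kernel K̂ of order 2^{6m} in ℝ^m, such that for every constant C there is a tuple (F_j)_{j∈𝒞} of real-valued smooth compactly supported functions on ℝ^m with |∫_{ℝ^m} φ̂(−Π^T η) K̂(η) dη| > C ∏_{j∈𝒞} ‖F_j‖_{L^{p_j}(ℝ^m)}, where φ := ∏_{j∈𝒞} F_j ∘ Π_j. (Consequently the variant of the singular Brascamp–Lieb L^p theorem in which the threshold 2^{m−1} is replaced by any smaller number q is false.) -/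
open MeasureTheory Matrix
open scoped ENNReal NNReal BigOperators

noncomputable section

namespace SBL

/-- The set of corners of the `m`-dimensional cube: functions `{1,…,m} → {0,1}`. -/
abbrev Corner (m : ℕ) := Fin m → Fin 2

/-- Index type for `ℝ^{2m}`: coordinates `x^0_i` (left) and `x^1_i` (right). -/
abbrev Idx (m : ℕ) := Fin m ⊕ Fin m

/-- The coordinate of `ℝ^{2m}` selected by the corner `j` at position `i`. -/
def sel {m : ℕ} (j : Corner m) (i : Fin m) : Idx m :=
  if j i = 0 then Sum.inl i else Sum.inr i

/-- The projection `Π_j : ℝ^{2m} → ℝ^m`, `Π_j x = (x_1^{j(1)},…,x_m^{j(m)})`. -/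
def proj {m : ℕ} (j : Corner m) (x : Idx m → ℝ) : Fin m → ℝ := fun i => x (sel j i)

/-- The projection `Π_j` as an `m × 2m` matrix. -/
def projM {m : ℕ} (j : Corner m) : Matrix (Fin m) (Idx m) ℝ :=
  Matrix.of fun i k => if k = sel j i then 1 else 0

/-- `A_j := Π_j J`, the `m × m` matrix obtained by applying `Π_j` to (the columns of) a
`2m × m` matrix `J`, i.e. selecting rows of `J` according to the corner `j`. -/
def Amat {m : ℕ} (J : Matrix (Idx m) (Fin m) ℝ) (j : Corner m) : Matrix (Fin m) (Fin m) ℝ :=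
  Matrix.of fun i k => J (sel j i) k

/-- Euclidean norm on a finite pi type. -/
def en {ι : Type*} [Fintype ι] (x : ι → ℝ) : ℝ := Real.sqrt (∑ i, (x i) ^ 2)

/-- Operator norm of a matrix with respect to the Euclidean norms. -/
def opNorm {ι κ : Type*} [Fintype ι] [Fintype κ] [DecidableEq κ] (A : Matrix ι κ ℝ) : ℝ :=
  ‖LinearMap.toContinuousLinearMap (Matrix.toEuclideanLin A)‖

/-- `Δ`-regularity of a square matrix: `max(‖A‖, |det A|⁻¹) ≤ Δ` (in particular `det A ≠ 0`). -/
def IsReg {m : ℕ} (Δ : ℝ) (A : Matrix (Fin m) (Fin m) ℝ) : Prop :=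
  opNorm A ≤ Δ ∧ A.det ≠ 0 ∧ |A.det|⁻¹ ≤ Δ

/-- A Calderón–Zygmund kernel of order `n` in `ℝ^m`, given by its multiplier `K̂` on
`ℝ^m ∖ {0}`: it is `n` times continuously differentiable there and satisfies the symbol
estimates `‖D^k K̂(η)‖ ≤ |η|^{-k}` for all `k ≤ n`. -/
def IsCZ {m : ℕ} (n : ℕ) (Khat : (Fin m → ℝ) → ℂ) : Prop :=
  ContDiffOn ℝ n Khat {0}ᶜ ∧
  ∀ k : ℕ, k ≤ n → ∀ η : Fin m → ℝ, η ≠ 0 →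
    ‖iteratedFDerivWithin ℝ k Khat {0}ᶜ η‖ ≤ (en η) ^ (-(k : ℝ))

/-- Fourier transform of a (nice) function on `ℝ^{2m}`. -/
def fourierT {m : ℕ} (φ : (Idx m → ℝ) → ℝ) (ξ : Idx m → ℝ) : ℂ :=
  ∫ x : Idx m → ℝ, Complex.exp (-2 * Real.pi * Complex.I * (∑ k, x k * ξ k)) * (φ x : ℂ)

/-- The principal value `p.v. ∫_{ℝ^{2m}} (∏_j F_j(Π_j x)) K(Πx) dx`, defined as
`∫_{ℝ^m} φ̂(−Π^T η) K̂(η) dη` with `φ = ∏_j F_j ∘ Π_j`. -/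
def pv {m : ℕ} (P : Matrix (Fin m) (Idx m) ℝ) (Khat : (Fin m → ℝ) → ℂ)
    (F : Corner m → (Fin m → ℝ) → ℝ) : ℂ :=
  ∫ η : Fin m → ℝ, fourierT (fun x => ∏ j, F j (proj j x)) (-(P.transpose.mulVec η)) * Khat η

/-- Upper `m×m` block `J^0` of a `2m×m` matrix. -/
def Jb0 {m : ℕ} (J : Matrix (Idx m) (Fin m) ℝ) : Matrix (Fin m) (Fin m) ℝ :=
  J.submatrix Sum.inl id

/-- Lower `m×m` block `J^1` of a `2m×m` matrix. -/
def Jb1 {m : ℕ} (J : Matrix (Idx m) (Fin m) ℝ) : Matrix (Fin m) (Fin m) ℝ :=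
  J.submatrix Sum.inr id

/-- `Π^J := (I, −J^0 (J^1)⁻¹)`. -/
def PiJ {m : ℕ} (J : Matrix (Idx m) (Fin m) ℝ) : Matrix (Fin m) (Idx m) ℝ :=
  Matrix.fromCols 1 (-(Jb0 J * (Jb1 J)⁻¹))

/-- The dyadic cube with parameters `Q = (k, n)`: `∏_i [2^k n_i, 2^k (n_i+1))`. -/
def dC {m : ℕ} (Q : ℤ × (Fin m → ℤ)) : Set (Fin m → ℝ) :=
  {x | ∀ i, (2:ℝ)^Q.1 * (Q.2 i : ℝ) ≤ x i ∧ x i < (2:ℝ)^Q.1 * ((Q.2 i : ℝ) + 1)}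

/-- `Q*`: the cube with the same center as `Q` and three times the side length. -/
def dCstar {m : ℕ} (Q : ℤ × (Fin m → ℤ)) : Set (Fin m → ℝ) :=
  {x | ∀ i, (2:ℝ)^Q.1 * ((Q.2 i : ℝ) - 1) ≤ x i ∧ x i < (2:ℝ)^Q.1 * ((Q.2 i : ℝ) + 2)}

/-- A (1/2-)sparse collection of dyadic cubes. -/
def IsSparse {m : ℕ} (S : Set (ℤ × (Fin m → ℤ))) : Prop :=
  ∀ Q ∈ S,
    (∑' Q' : {q : ℤ × (Fin m → ℤ) // q ∈ S ∧ dC q ⊆ dC Q}, volume (dC Q'.val)) ≤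
      2 * volume (dC Q)

/-- The average `[F]_S := (|S|⁻¹ ∫_S |F|^{2^{m-1}})^{2^{1-m}}`. -/
def avg {m : ℕ} (S : Set (Fin m → ℝ)) (F : (Fin m → ℝ) → ℝ) : ℝ :=
  (((volume S).toReal)⁻¹ * ∫ x in S, |F x| ^ (2^(m-1) : ℕ)) ^ ((2:ℝ) ^ ((1:ℤ) - (m:ℤ)))

/-- The closed axis-parallel box `∏_i [a_i, b_i]`. -/
def box {m : ℕ} (a b : Fin m → ℝ) : Set (Fin m → ℝ) := {x | ∀ i, a i ≤ x i ∧ x i ≤ b i}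

/-- Reciprocal eccentricity `ε_R = (min_i |I_i|)/(max_i |I_i|)` of the box `∏_i [a_i,b_i]`. -/
def ecc {m : ℕ} (a b : Fin m → ℝ) : ℝ := (⨅ i, (b i - a i)) / (⨆ i, (b i - a i))

/-- Modified strong maximal function evaluated on a set `S`:
`sup { (ε_R^α)^{2^{1-m}} [F]_R : R ∈ ℛ, S ⊆ R }` (as an extended real). -/
def Mal {m : ℕ} (α : ℝ) (F : (Fin m → ℝ) → ℝ) (S : Set (Fin m → ℝ)) : ℝ≥0∞ :=
  ⨆ (a : Fin m → ℝ) (b : Fin m → ℝ) (_ : ∀ i, a i < b i) (_ : S ⊆ box a b),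
    ENNReal.ofReal ((ecc a b ^ α) ^ ((2:ℝ) ^ ((1:ℤ) - (m:ℤ))) * avg (box a b) F)

/-- `M_α(F)(A𝒯) := sup_{Q ∈ 𝒯} M_α(F)(AQ)`. -/
def MalTree {m : ℕ} (α : ℝ) (F : (Fin m → ℝ) → ℝ) (A : Matrix (Fin m) (Fin m) ℝ)
    (T : Set (ℤ × (Fin m → ℤ))) : ℝ≥0∞ :=
  ⨆ Q ∈ T, Mal α F (A.mulVec '' dC Q)

/-- A convex tree of dyadic cubes with top cube `Qt`. -/
def ConvexTree {m : ℕ} (T : Set (ℤ × (Fin m → ℤ))) (Qt : ℤ × (Fin m → ℤ)) : Prop :=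
  Qt ∈ T ∧ (∀ Q ∈ T, dC Q ⊆ dC Qt) ∧
  ∀ Q ∈ T, ∀ Q' : ℤ × (Fin m → ℤ), dC Q ⊆ dC Q' → dC Q' ⊆ dC Qt → Q' ∈ T

/-- The Gaussian `g(x) = e^{−π|x|²}` on `ℝ^{2m}`. -/
def gss {m : ℕ} (x : Idx m → ℝ) : ℝ := Real.exp (-Real.pi * ∑ k, (x k) ^ 2)

/-- The mixed partial derivative `∂^0_i ∂^1_i g`. -/
def ddg {m : ℕ} (i : Fin m) (x : Idx m → ℝ) : ℝ :=
  fderiv ℝ (fun y : Idx m → ℝ => fderiv ℝ gss y (Pi.single (Sum.inl i) (1:ℝ))) x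
    (Pi.single (Sum.inr i) (1:ℝ))

/-- Isotropic `L¹` dilation on `ℝ^{2m}`: `φ_t(x) = t^{-2m} φ(t⁻¹ x)`. -/
def dil {m : ℕ} (t : ℝ) (φ : (Idx m → ℝ) → ℝ) (x : Idx m → ℝ) : ℝ :=
  (t ^ (2*m))⁻¹ * φ (t⁻¹ • x)

/-- Matrix dilation: `φ_D(x) = (det D)⁻¹ φ(D⁻¹ x)`. -/
def dilM {m : ℕ} (D : Matrix (Idx m) (Idx m) ℝ) (φ : (Idx m → ℝ) → ℝ) (x : Idx m → ℝ) : ℝ :=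
  (D.det)⁻¹ * φ (D⁻¹.mulVec x)

/-- The region `Ω_𝒯 = ∪_{Q∈𝒯} Q × (ℓ(Q)/2, ℓ(Q))` in the upper half space. -/
def Omega {m : ℕ} (T : Set (ℤ × (Fin m → ℤ))) : Set ((Fin m → ℝ) × ℝ) :=
  ⋃ Q ∈ T, (dC Q) ×ˢ Set.Ioo ((2:ℝ)^Q.1 / 2) ((2:ℝ)^Q.1)

/-- The localized form `Λ_𝒯((F_j)_j)`. -/
def LambdaT {m : ℕ} (J : Matrix (Idx m) (Fin m) ℝ) (T : Set (ℤ × (Fin m → ℤ)))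
    (c : ℝ → ℂ) (u : Idx m → ℝ) (i : Fin m) (F : Corner m → (Fin m → ℝ) → ℝ) : ℂ :=
  ∫ z in Omega T, c z.2 * Complex.ofReal ((1 + en u ^ (4*m))⁻¹ * (z.2)⁻¹ *
    ∫ x : Idx m → ℝ, (∏ j, F j (proj j x)) * dil z.2 (ddg i) (x - J.mulVec z.1 + z.2 • u))

/-- `T_k := ∪ {Q ∈ 𝒯 : ℓ(Q) = 2^k}`. -/
def Tkset {m : ℕ} (T : Set (ℤ × (Fin m → ℤ))) (k : ℤ) : Set (Fin m → ℝ) :=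
  ⋃ Q ∈ {q ∈ T | q.1 = k}, dC Q

/-- The form `Λ̃_𝒯((F_j)_j)` with localization in the `x` variables. -/
def LambdaTilde {m : ℕ} (J : Matrix (Idx m) (Fin m) ℝ) (T : Set (ℤ × (Fin m → ℤ)))
    (c : ℝ → ℂ) (u : Idx m → ℝ) (i : Fin m) (F : Corner m → (Fin m → ℝ) → ℝ) : ℂ :=
  ∑' k : ℤ, ∫ t in Set.Ioc ((2:ℝ)^(k-1)) ((2:ℝ)^k),
    c t * Complex.ofReal ((1 + en u ^ (4*m))⁻¹ * t⁻¹ *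
      ∫ p : Fin m → ℝ, ∫ x : Idx m → ℝ,
        (∏ j, Set.indicator ((Amat J j).mulVec '' Tkset T k) (F j) (proj j x)) *
          dil t (ddg i) (x - J.mulVec p + t • u))

/-- The form `Λ(𝒯,J,K)((F_j)_j)` from the induction proposition. -/
def LambdaK {m : ℕ} (J : Matrix (Idx m) (Fin m) ℝ) (T : Set (ℤ × (Fin m → ℤ)))
    (K : ℝ → (Idx m → ℝ) → ℂ) (F : Corner m → (Fin m → ℝ) → ℝ) : ℂ :=
  ∑' k : ℤ, ∫ x : Idx m → ℝ,
    Complex.ofReal (∏ j, Set.indicator ((Amat J j).mulVec '' Tkset T k) (F j) (proj j x)) *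
      ∫ t in Set.Ioc ((2:ℝ)^(k-1)) ((2:ℝ)^k), K t x * (t : ℂ)⁻¹

/-- The reflected corner `i∗j`, differing from `j` exactly at position `i`. -/
def istar {m : ℕ} (i : Fin m) (j : Corner m) : Corner m :=
  fun k => if k = i then 1 - j i else j k

/-- The diagonal matrix `Θ̃` with entry 0 at positions `i ≤ l` and 1 at positions `i > l`
(1-based), i.e. 0 for `i < l` and 1 otherwise in 0-based indexing. -/
def Th {m : ℕ} (l : ℕ) : Matrix (Fin m) (Fin m) ℝ :=
  Matrix.diagonal fun i => if (i : ℕ) < l then 0 else 1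

/-- The block diagonal matrix `Θ = diag(Θ̃, Θ̃)`. -/
def ThB {m : ℕ} (l : ℕ) : Matrix (Idx m) (Idx m) ℝ :=
  Matrix.diagonal (Sum.elim (fun i : Fin m => if (i:ℕ) < l then (0:ℝ) else 1)
    (fun i : Fin m => if (i:ℕ) < l then (0:ℝ) else 1))

end SBL

namespace SBL

/-!
Take `Π = (I, -I)` and the multiplier `K̂(η) = c η_{i₀} / |η|`, with exponent `2^{m-1}` at the
corners `j` with `j(i₀) = 0` and `∞` at the others. For tensor products dilated by `M` in all
directions but `i₀`, the rescaled multiplier tends to `sign η_{i₀}` as `M → ∞`, so the form splits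
into one-dimensional factors: scalar products in the directions `i ≠ i₀`, and in direction `i₀` the
Hilbert transform paired with two functions. The kernel `1 / (y - x)` of the latter, integrated
against a cutoff `v` equal to `1` on `[3, T]`, is of size `log T`. As `v` enters only the functions
measured in `L^∞`, the product of the norms stays bounded relative to the Jacobian of the dilation,
uniformly in `T`; letting `T → ∞` contradicts any bound.
-/

open scoped FourierTransform ContDiff
open Filter Topology

section EuclideanNorm

variable {ι : Type*} [Fintype ι]

lemma en_eq_norm_toLp (x : ι → ℝ) : en x = ‖WithLp.toLp 2 x‖ := by
  simp [en, EuclideanSpace.norm_eq]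

lemma en_pos {x : ι → ℝ} (hx : x ≠ 0) : 0 < en x := by
  simpa [en_eq_norm_toLp] using hx

lemma en_smul (t : ℝ) (x : ι → ℝ) : en (t • x) = |t| * en x := by
  simp only [en_eq_norm_toLp, WithLp.toLp_smul, norm_smul, Real.norm_eq_abs]

lemma en_single [DecidableEq ι] (i : ι) (t : ℝ) : en (Pi.single i t) = |t| := by
  simp [en_eq_norm_toLp]

lemma abs_apply_le_en (x : ι → ℝ) (i : ι) : |x i| ≤ en x := by
  simpa only [en_eq_norm_toLp, Real.norm_eq_abs] using PiLp.norm_apply_le (WithLp.toLp 2 x) i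

lemma continuous_en : Continuous (en : (ι → ℝ) → ℝ) := by
  unfold en
  fun_prop

lemma contDiffAt_en {n : WithTop ℕ∞} {x : ι → ℝ} (hx : x ≠ 0) : ContDiffAt ℝ n en x :=
  ContDiffAt.sqrt (by fun_prop) (Real.sqrt_pos.mp (en_pos hx)).ne'

lemma isCompact_setOf_en_eq (r : ℝ) : IsCompact {x : ι → ℝ | en x = r} := by
  have hball : {x : ι → ℝ | en x = r} ⊆ Metric.closedBall 0 |r| := fun x hx => by
    rw [mem_closedBall_zero_iff, pi_norm_le_iff_of_nonneg (abs_nonneg r)]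
    exact fun i => (abs_apply_le_en x i).trans (hx.le.trans (le_abs_self r))
  exact (isCompact_closedBall 0 |r|).of_isClosed_subset
    (isClosed_eq continuous_en continuous_const) hball

end EuclideanNorm

section Homogeneous

lemma norm_iteratedFDerivWithin_le_of_comp_smul_eq {E F : Type*} [NormedAddCommGroup E]
    [NormedSpace ℝ E] [NormedAddCommGroup F] [NormedSpace ℝ F] {f : E → F} {t : ℝ} (ht : t ≠ 0)
    (hf : ∀ x, f (t • x) = f x) (k : ℕ) {x : E} (hx : x ≠ 0) :
    ‖iteratedFDerivWithin ℝ k f {0}ᶜ x‖ ≤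
      |t| ^ k * ‖iteratedFDerivWithin ℝ k f {0}ᶜ (t • x)‖ := by
  let g : E ≃L[ℝ] E := ContinuousLinearEquiv.smulLeft (Units.mk0 t ht)
  have hpre : g ⁻¹' ({0}ᶜ : Set E) = {0}ᶜ := by
    ext y
    simp
  have hcomp : f ∘ g = f := funext hf
  have hnorm : ‖(g : E →L[ℝ] E)‖ ≤ |t| :=
    ContinuousLinearMap.opNorm_le_bound _ (abs_nonneg t) fun y => (norm_smul t y).le
  have hderiv := g.iteratedFDerivWithin_comp_right f (s := {0}ᶜ)
    isOpen_compl_singleton.uniqueDiffOn (x := x) (by simpa using hx) k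
  rw [hpre, hcomp] at hderiv
  rw [hderiv, mul_comm]
  refine (ContinuousMultilinearMap.norm_compContinuousLinearMap_le _ _).trans ?_
  rw [Finset.prod_const, Finset.card_univ, Fintype.card_fin]
  exact mul_le_mul_of_nonneg_left (pow_le_pow_left₀ (norm_nonneg _) hnorm k) (norm_nonneg _)

variable {ι : Type*} [Fintype ι] {F : Type*} [NormedAddCommGroup F] [NormedSpace ℝ F]
  {K : (ι → ℝ) → F} {n : ℕ}

lemma exists_norm_iteratedFDerivWithin_le_rpow_en (hK : ContDiffOn ℝ n K {0}ᶜ)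
    (hhom : ∀ t : ℝ, 0 < t → ∀ η, K (t • η) = K η) :
    ∃ B > 0, ∀ k ≤ n, ∀ η ≠ 0,
      ‖iteratedFDerivWithin ℝ k K {0}ᶜ η‖ ≤ B * en η ^ (-(k : ℝ)) := by
  have hsphere : {η : ι → ℝ | en η = 1} ⊆ {0}ᶜ := by
    rintro η hη rfl
    simp [en] at hη
  have hbound : ∀ k ∈ Set.Iic n, ∀ᶠ B : ℝ in atTop, ∀ η, en η = 1 →
      ‖iteratedFDerivWithin ℝ k K {0}ᶜ η‖ ≤ B := fun k hk => by
    have hcont := hK.continuousOn_iteratedFDerivWithin (m := k) (by exact_mod_cast hk)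
      isOpen_compl_singleton.uniqueDiffOn
    obtain ⟨B, hB⟩ :=
      (isCompact_setOf_en_eq 1).exists_bound_of_continuousOn (hcont.mono hsphere)
    filter_upwards [eventually_ge_atTop B] with B' hB' η hη using (hB η hη).trans hB'
  obtain ⟨B, hB, hpos⟩ := (((eventually_all_finite (Set.finite_Iic n)).2 hbound).and
    (eventually_gt_atTop 0)).exists
  refine ⟨B, hpos, fun k hk η hη => ?_⟩
  have hη' : 0 < (en η)⁻¹ := inv_pos.2 (en_pos hη)
  have hunit : en ((en η)⁻¹ • η) = 1 := by
    rw [en_smul, abs_of_pos hη', inv_mul_cancel₀ (en_pos hη).ne']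
  calc ‖iteratedFDerivWithin ℝ k K {0}ᶜ η‖
      ≤ |(en η)⁻¹| ^ k * ‖iteratedFDerivWithin ℝ k K {0}ᶜ ((en η)⁻¹ • η)‖ :=
        norm_iteratedFDerivWithin_le_of_comp_smul_eq hη'.ne' (hhom _ hη') k hη
    _ ≤ |(en η)⁻¹| ^ k * B := by gcongr; exact hB k hk _ hunit
    _ = B * en η ^ (-(k : ℝ)) := by
        rw [abs_of_pos hη', mul_comm, Real.rpow_neg (en_pos hη).le, Real.rpow_natCast, inv_pow]

lemma exists_isCZ_smul {m : ℕ} {K : (Fin m → ℝ) → ℂ} (hK : ContDiffOn ℝ n K {0}ᶜ)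
    (hhom : ∀ t : ℝ, 0 < t → ∀ η, K (t • η) = K η) : ∃ c : ℝ, 0 < c ∧ IsCZ n (c • K) := by
  obtain ⟨B, hB, hbound⟩ := exists_norm_iteratedFDerivWithin_le_rpow_en hK hhom
  refine ⟨B⁻¹, inv_pos.2 hB, hK.const_smul B⁻¹, fun k hk η hη => ?_⟩
  rw [iteratedFDerivWithin_const_smul_apply ((hK.of_le (by exact_mod_cast hk)).contDiffWithinAt hη)
    isOpen_compl_singleton.uniqueDiffOn hη, norm_smul, Real.norm_of_nonneg (by positivity),
    inv_mul_le_iff₀ hB]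
  exact hbound k hk η hη

end Homogeneous

/-- The symbol `η_i / |η|` of the `i`-th Riesz transform, up to a unimodular constant; its value at
the origin is `0`. -/
def riesz {ι : Type*} [Fintype ι] (i : ι) (η : ι → ℝ) : ℂ := ((η i / en η : ℝ) : ℂ)

section Riesz

variable {ι : Type*} [Fintype ι] (i : ι)

lemma contDiffOn_riesz (n : WithTop ℕ∞) : ContDiffOn ℝ n (riesz i) {0}ᶜ := fun η hη =>
  (Complex.ofRealCLM.contDiff.contDiffAt.comp η
    (ContDiffAt.div (by fun_prop) (contDiffAt_en hη) (en_pos hη).ne')).contDiffWithinAt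

lemma riesz_smul {t : ℝ} (ht : 0 < t) (η : ι → ℝ) : riesz i (t • η) = riesz i η := by
  rw [riesz, riesz, en_smul, abs_of_pos ht, Pi.smul_apply, smul_eq_mul, mul_div_mul_left _ _ ht.ne']

lemma norm_riesz_le_one (η : ι → ℝ) : ‖riesz i η‖ ≤ 1 := by
  rw [riesz, Complex.norm_real, norm_div, Real.norm_eq_abs, Real.norm_eq_abs]
  exact div_le_one_of_le₀ ((abs_apply_le_en η i).trans (le_abs_self _)) (abs_nonneg _)

lemma measurable_riesz : Measurable (riesz i) :=
  Complex.measurable_ofReal.comp ((measurable_pi_apply i).div continuous_en.measurable)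

lemma riesz_single [DecidableEq ι] (t : ℝ) :
    riesz i (Pi.single i t) = ((SignType.sign t : ℝ) : ℂ) := by
  rcases eq_or_ne t 0 with rfl | ht
  · simp [riesz]
  · rw [riesz, en_single, Pi.single_eq_same, div_eq_of_eq_mul (abs_ne_zero.2 ht)]
    exact (sign_mul_abs t).symm

end Riesz

section Sign

lemma measurable_coe_sign : Measurable fun x : ℝ => (SignType.sign x : ℝ) := by
  refine Monotone.measurable fun x y hxy => ?_
  have h := SignType.sign.monotone hxy
  revert h
  generalize SignType.sign x = a
  generalize SignType.sign y = b
  cases a <;> cases b <;> simp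

lemma norm_coe_sign_le_one (x : ℝ) : ‖(SignType.sign x : ℝ)‖ ≤ 1 := by
  cases SignType.sign x <;> simp

variable {E : Type*} [NormedAddCommGroup E] [NormedSpace ℝ E]

lemma integrable_sign_smul {f : ℝ → E} (hf : Integrable f) :
    Integrable fun x => (SignType.sign x : ℝ) • f x :=
  hf.bdd_smul 1 measurable_coe_sign.aestronglyMeasurable (ae_of_all _ norm_coe_sign_le_one)

lemma integral_sign_smul {f : ℝ → E} (hf : Integrable f) :
    ∫ x, (SignType.sign x : ℝ) • f x = (∫ x in Set.Ioi 0, f x) - ∫ x in Set.Iic 0, f x := by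
  have hpos : ∫ x in Set.Ioi 0, (SignType.sign x : ℝ) • f x = ∫ x in Set.Ioi 0, f x :=
    setIntegral_congr_fun measurableSet_Ioi fun x hx => by simp [sign_pos (Set.mem_Ioi.1 hx)]
  have hneg : ∫ x in Set.Iic 0, (SignType.sign x : ℝ) • f x = -∫ x in Set.Iic 0, f x := by
    rw [integral_Iic_eq_integral_Iio, integral_Iic_eq_integral_Iio, ← integral_neg]
    exact setIntegral_congr_fun measurableSet_Iio fun x hx => by
      simp [sign_neg (Set.mem_Iio.1 hx)]
  rw [← integral_add_compl measurableSet_Iic (integrable_sign_smul hf), Set.compl_Iic, hpos, hneg]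
  abel

lemma integral_sign_smul_deriv [CompleteSpace E] {f f' : ℝ → E} {a b : E}
    (hf : ∀ x, HasDerivAt f (f' x) x) (hf' : Integrable f') (hbot : Tendsto f atBot (𝓝 a))
    (htop : Tendsto f atTop (𝓝 b)) :
    ∫ x, (SignType.sign x : ℝ) • f' x = a + b - (2 : ℝ) • f 0 := by
  rw [integral_sign_smul hf',
    integral_Ioi_of_hasDerivAt_of_tendsto' (fun x _ => hf x) hf'.integrableOn htop,
    integral_Iic_of_hasDerivAt_of_tendsto' (fun x _ => hf x) hf'.integrableOn hbot, two_smul]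
  abel

end Sign

section FourierPairing

variable {V E : Type*} [NormedAddCommGroup V] [InnerProductSpace ℝ V] [FiniteDimensional ℝ V]
  [MeasurableSpace V] [BorelSpace V] [NormedAddCommGroup E] [NormedSpace ℂ E]
  {f : V → ℂ} {g : V → E}

lemma integral_fourierInv_smul_eq [CompleteSpace E] (hf : Integrable f) (hg : Integrable g) :
    ∫ ξ, 𝓕⁻ f ξ • g ξ = ∫ x, f x • 𝓕⁻ g x := by
  have hflip : (-innerₗ V).flip = -innerₗ V := by
    ext x y
    simp [real_inner_comm]
  have h := VectorFourier.integral_fourierIntegral_smul_eq_flip (L := -innerₗ V)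
    Real.continuous_fourierChar continuous_inner.neg hf hg
  rwa [hflip] at h

lemma integral_fourierInv_smul_fourier [CompleteSpace E] (hf : Integrable f) (hg : Integrable g)
    (hgc : Continuous g) (hFg : Integrable (𝓕 g)) :
    ∫ ξ, 𝓕⁻ f ξ • 𝓕 g ξ = ∫ x, f x • g x := by
  rw [integral_fourierInv_smul_eq hf hFg, hgc.fourierInv_fourier_eq hg hFg]

lemma integrable_fourierInv_smul (hf : Integrable f) (hg : Integrable g) :
    Integrable fun ξ => 𝓕⁻ f ξ • g ξ := by
  have hcont : Continuous (𝓕⁻ f) := VectorFourier.fourierIntegral_continuous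
    Real.continuous_fourierChar (L := -innerₗ V) continuous_inner.neg hf
  exact hg.bdd_smul _ hcont.aestronglyMeasurable
    (ae_of_all _ fun ξ => VectorFourier.norm_fourierIntegral_le_integral_norm _ _ _ f ξ)

end FourierPairing

section ReciprocalKernel

variable {E : Type*} [NormedAddCommGroup E] [NormedSpace ℝ E]

lemma norm_inv_smul_le {δ t : ℝ} {v : E} (hδ : 0 < δ) (hv : |t| < δ → v = 0) :
    ‖t⁻¹ • v‖ ≤ δ⁻¹ * ‖v‖ := by
  rcases lt_or_ge |t| δ with ht | ht
  · simp [hv ht]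
  · rw [norm_smul, norm_inv, Real.norm_eq_abs]
    gcongr

lemma integrable_inv_sub_smul {g : ℝ → E} (hg : Integrable g) {x δ : ℝ} (hδ : 0 < δ)
    (hsupp : ∀ y, |y - x| < δ → g y = 0) : Integrable fun y => (y - x)⁻¹ • g y :=
  have hinv : Measurable fun y : ℝ => (y - x)⁻¹ := by fun_prop
  (hg.norm.const_mul δ⁻¹).mono' (hinv.aestronglyMeasurable.smul hg.aestronglyMeasurable)
    (ae_of_all _ fun y => norm_inv_smul_le hδ (hsupp y))

lemma integrable_smul_integral_inv_sub_smul {f : ℝ → ℝ} {g : ℝ → E} (hf : Integrable f)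
    (hg : Integrable g) {δ : ℝ} (hδ : 0 < δ) (hsupp : ∀ x y, |y - x| < δ → f x = 0 ∨ g y = 0) :
    Integrable fun x => f x • ∫ y, (y - x)⁻¹ • g y := by
  have hinv : Measurable fun z : ℝ × ℝ => (z.2 - z.1)⁻¹ := by fun_prop
  have hprod : Integrable (fun z : ℝ × ℝ => f z.1 • (z.2 - z.1)⁻¹ • g z.2)
      (volume.prod volume) := by
    refine ((hf.norm.mul_prod hg.norm).const_mul δ⁻¹).mono' (hf.aestronglyMeasurable.comp_fst.smul
      (hinv.aestronglyMeasurable.smul hg.aestronglyMeasurable.comp_snd)) (ae_of_all _ fun z => ?_)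
    rcases eq_or_ne (f z.1) 0 with hz | hz
    · simp [hz]
    · rw [norm_smul, mul_left_comm]
      gcongr
      exact norm_inv_smul_le hδ fun h => (hsupp _ _ h).resolve_left hz
  simpa only [integral_smul] using hprod.integral_prod_left

lemma log_div_le_integral_inv_sub_mul {g : ℝ → ℝ} (hg : Integrable g) (hg0 : ∀ y, 0 ≤ g y)
    {a b x δ : ℝ} (hδ : 0 < δ) (hsupp : ∀ y, y < x + δ → g y = 0) (hxa : x < a) (hab : a ≤ b)
    (hone : ∀ y ∈ Set.Icc a b, g y = 1) :
    Real.log ((b - x) / (a - x)) ≤ ∫ y, (y - x)⁻¹ * g y := by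
  have hint : Integrable fun y => (y - x)⁻¹ * g y :=
    integrable_inv_sub_smul hg hδ fun y hy => hsupp y (by linarith [(abs_lt.1 hy).2])
  have hnonneg : ∀ y, 0 ≤ (y - x)⁻¹ * g y := fun y => by
    rcases lt_or_ge y (x + δ) with hy | hy
    · simp [hsupp y hy]
    · exact mul_nonneg (inv_nonneg.2 (by linarith)) (hg0 y)
  calc Real.log ((b - x) / (a - x))
    _ = ∫ y in Set.Ioc a b, (y - x)⁻¹ := by
      rw [← intervalIntegral.integral_of_le hab, intervalIntegral.integral_comp_sub_right,
        integral_inv_of_pos (by linarith) (by linarith)]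
    _ = ∫ y in Set.Ioc a b, (y - x)⁻¹ * g y :=
      setIntegral_congr_fun measurableSet_Ioc fun y hy => by
        simp [hone y (Set.Ioc_subset_Icc_self hy)]
    _ ≤ ∫ y, (y - x)⁻¹ * g y := setIntegral_le_integral hint (ae_of_all _ hnonneg)

end ReciprocalKernel

section HilbertTransform

variable {E : Type*} [NormedAddCommGroup E] [NormedSpace ℂ E]

lemma fourier_const_smul_apply (c : ℂ) (f : ℝ → E) (ξ : ℝ) : 𝓕 (fun x => c • f x) ξ = c • 𝓕 f ξ :=
  congrFun (VectorFourier.fourierIntegral_const_smul _ _ _ f c) ξ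

lemma fourier_comp_add_right (f : ℝ → E) (a ξ : ℝ) :
    𝓕 (fun x => f (x + a)) ξ = 𝐞 (a * ξ) • 𝓕 f ξ := by
  rw [mul_comm]
  exact congrFun (VectorFourier.fourierIntegral_comp_add_right _ _ (innerₗ ℝ) f a) ξ

variable [CompleteSpace E]

lemma integral_sign_smul_fourier_id_smul {h : ℝ → E} (hh : Integrable h)
    (hxh : Integrable fun x => x • h x) (hF : Integrable (𝓕 fun x => x • h x)) :
    ∫ ξ, (SignType.sign ξ : ℝ) • 𝓕 (fun x => x • h x) ξ = -(Complex.I / Real.pi) • ∫ x, h x := by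
  have hderiv : ∀ ξ, HasDerivAt (𝓕 h) ((-2 * Real.pi * Complex.I) • 𝓕 (fun x => x • h x) ξ) ξ :=
    fun ξ => by
      convert Real.hasDerivAt_fourier hh hxh ξ using 1
      simp_rw [← fourier_const_smul_apply, mul_smul, Complex.coe_smul]
  have hlim := Real.zero_at_infty_fourier h
  have hftc := integral_sign_smul_deriv hderiv (hF.smul _)
    (hlim.mono_left atBot_le_cocompact) (hlim.mono_left atTop_le_cocompact)
  have hzero : 𝓕 h 0 = ∫ x, h x := by simp [Real.fourier_real_eq]
  have hpi : (Real.pi : ℂ) ≠ 0 := by exact_mod_cast Real.pi_ne_zero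
  simp_rw [smul_comm _ (-2 * Real.pi * Complex.I : ℂ)] at hftc
  rw [integral_smul, hzero, add_zero, zero_sub, ← neg_smul, ← Complex.coe_smul] at hftc
  have hne : (-2 * Real.pi * Complex.I : ℂ) ≠ 0 := by simp [hpi]
  rw [← smul_right_injective E hne |>.eq_iff, hftc, smul_smul]
  congr 1
  field_simp
  simp

lemma fourierInv_sign_smul_fourier {g : ℝ → E} (hg : Integrable g) (hFg : Integrable (𝓕 g))
    {x δ : ℝ} (hδ : 0 < δ) (hsupp : ∀ y, |y - x| < δ → g y = 0) :
    𝓕⁻ (fun ξ => (SignType.sign ξ : ℝ) • 𝓕 g ξ) x =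
      -(Complex.I / Real.pi) • ∫ y, (y - x)⁻¹ • g y := by
  have hid : (fun y => y • y⁻¹ • g (y + x)) = fun y => g (y + x) := by
    funext y
    rcases eq_or_ne y 0 with rfl | hy
    · rw [zero_smul, hsupp _ (by simpa using hδ)]
    · rw [smul_inv_smul₀ hy]
  have hint : Integrable fun y => y⁻¹ • g (y + x) := by
    simpa using (integrable_inv_sub_smul hg hδ hsupp).comp_add_right x
  have htrans : 𝓕 (fun y => g (y + x)) = fun ξ => 𝐞 (x * ξ) • 𝓕 g ξ :=
    funext (fourier_comp_add_right g x)
  have hmod : Integrable fun ξ => 𝐞 (x * ξ) • 𝓕 g ξ := by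
    have hchar : Continuous fun ξ => (𝐞 (x * ξ) : ℂ) := by fun_prop
    exact hFg.bdd_smul (𝕜 := ℂ) 1 hchar.aestronglyMeasurable
      (ae_of_all _ fun ξ => (Circle.norm_coe _).le)
  have h := integral_sign_smul_fourier_id_smul hint (by rw [hid]; exact hg.comp_add_right x)
    (by rwa [hid, htrans])
  rw [hid, htrans] at h
  rw [← integral_add_right_eq_self _ x, Real.fourierInv_eq]
  simp only [add_sub_cancel_right]
  rw [← h]
  congr 1 with ξ
  rw [smul_comm]
  congr 2

lemma integral_fourierInv_smul_sign_smul_fourier {f : ℝ → ℂ} {g : ℝ → E} {δ : ℝ}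
    (hf : Integrable f) (hg : Integrable g) (hFg : Integrable (𝓕 g)) (hδ : 0 < δ)
    (hsupp : ∀ x y, |y - x| < δ → f x = 0 ∨ g y = 0) :
    ∫ ξ, 𝓕⁻ f ξ • (SignType.sign ξ : ℝ) • 𝓕 g ξ =
      -(Complex.I / Real.pi) • ∫ x, f x • ∫ y, (y - x)⁻¹ • g y := by
  rw [integral_fourierInv_smul_eq hf (integrable_sign_smul hFg), ← integral_smul]
  congr 1 with x
  rcases eq_or_ne (f x) 0 with hx | hx
  · simp [hx]
  · rw [fourierInv_sign_smul_fourier hg hFg hδ fun y hy => (hsupp x y hy).resolve_left hx,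
      smul_comm]

lemma le_norm_integral_fourierInv_mul_sign_mul_fourier {f g : ℝ → ℝ} {δ L : ℝ}
    (hf : Integrable f) (hf0 : ∀ x, 0 ≤ f x) (hg : Integrable g)
    (hFg : Integrable (𝓕 fun x => (g x : ℂ))) (hδ : 0 < δ)
    (hsupp : ∀ x y, |y - x| < δ → f x = 0 ∨ g y = 0)
    (hL : ∀ x, f x ≠ 0 → L ≤ ∫ y, (y - x)⁻¹ * g y) :
    Real.pi⁻¹ * ((∫ x, f x) * L) ≤
      ‖∫ ξ, 𝓕⁻ (fun x => (f x : ℂ)) ξ * ((SignType.sign ξ : ℝ) * 𝓕 (fun x => (g x : ℂ)) ξ)‖ := by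
  have hle : (∫ x, f x) * L ≤ ∫ x, f x * ∫ y, (y - x)⁻¹ * g y := by
    rw [← integral_mul_const]
    refine integral_mono (hf.mul_const _)
      (integrable_smul_integral_inv_sub_smul hf hg hδ hsupp) fun x => ?_
    rcases eq_or_ne (f x) 0 with hx | hx
    · simp [hx]
    · exact mul_le_mul_of_nonneg_left (hL x hx) (hf0 x)
  have h : ∫ ξ, 𝓕⁻ (fun x => (f x : ℂ)) ξ *
      ((SignType.sign ξ : ℝ) * 𝓕 (fun x => (g x : ℂ)) ξ) =
        -(Complex.I / Real.pi) * ((∫ x, f x * ∫ y, (y - x)⁻¹ * g y : ℝ) : ℂ) := by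
    simp only [← integral_complex_ofReal, Complex.ofReal_mul]
    simpa only [smul_eq_mul, Complex.real_smul] using
      integral_fourierInv_smul_sign_smul_fourier (f := fun x => (f x : ℂ)) hf.ofReal hg.ofReal hFg
        hδ fun x y hxy => by exact_mod_cast hsupp x y hxy
  rw [h, norm_mul, norm_neg, norm_div, Complex.norm_I, Complex.norm_real, Complex.norm_real,
    Real.norm_of_nonneg Real.pi_pos.le, one_div]
  gcongr
  exact hle.trans (le_abs_self _)

end HilbertTransform

lemma integrable_fourier_of_contDiff {V E : Type*} [NormedAddCommGroup V] [InnerProductSpace ℝ V]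
    [FiniteDimensional ℝ V] [MeasurableSpace V] [BorelSpace V] [NormedAddCommGroup E]
    [NormedSpace ℂ E] {g : V → E} (hg : ContDiff ℝ ∞ g) (hgc : HasCompactSupport g) :
    Integrable (𝓕 g) :=
  SchwartzMap.fourier_coe (hgc.toSchwartzMap hg) ▸ (𝓕 (hgc.toSchwartzMap hg)).integrable

lemma fourier_comp_div {E : Type*} [NormedAddCommGroup E] [NormedSpace ℂ E] (f : ℝ → E) {a : ℝ}
    (ha : 0 < a) (ξ : ℝ) : 𝓕 (fun x => f (x / a)) ξ = a • 𝓕 f (a * ξ) := by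
  have h := Measure.integral_comp_div (fun x => 𝐞 (-(x * (a * ξ))) • f x) a
  rw [abs_of_pos ha] at h
  rw [Real.fourier_real_eq, Real.fourier_real_eq, ← h]
  congr 1 with x
  rw [← mul_assoc, div_mul_cancel₀ _ ha.ne']

section CrossSpectrum

/-- The cross spectrum `𝓕⁻ f * 𝓕 g` of two real functions on the line, that is, the Fourier
transform of the tensor product `f ⊗ g` restricted to the antidiagonal `(-ξ, ξ)`. -/
def crossSpectrum (f g : ℝ → ℝ) (ξ : ℝ) : ℂ :=
  𝓕⁻ (fun x => (f x : ℂ)) ξ * 𝓕 (fun x => (g x : ℂ)) ξ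

variable {f g : ℝ → ℝ}

lemma crossSpectrum_comp_div (f g : ℝ → ℝ) {a : ℝ} (ha : 0 < a) (ξ : ℝ) :
    crossSpectrum (fun x => f (x / a)) (fun x => g (x / a)) ξ =
      (a * a : ℝ) * crossSpectrum f g (a * ξ) := by
  simp only [crossSpectrum, Real.fourierInv_eq_fourier_neg,
    fourier_comp_div (fun x => (f x : ℂ)) ha, fourier_comp_div (fun x => (g x : ℂ)) ha,
    Complex.real_smul, Complex.ofReal_mul, mul_neg]
  ring

lemma integrable_crossSpectrum (hf : Integrable f) (hFg : Integrable (𝓕 fun x => (g x : ℂ))) :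
    Integrable (crossSpectrum f g) :=
  integrable_fourierInv_smul hf.ofReal hFg

lemma integral_crossSpectrum (hf : Integrable f) (hg : Integrable g) (hgc : Continuous g)
    (hFg : Integrable (𝓕 fun x => (g x : ℂ))) :
    ∫ ξ, crossSpectrum f g ξ = ((∫ x, f x * g x : ℝ) : ℂ) := by
  rw [← integral_complex_ofReal]
  simpa only [crossSpectrum, Complex.ofReal_mul, smul_eq_mul] using integral_fourierInv_smul_fourier
    (f := fun x => (f x : ℂ)) (g := fun x => (g x : ℂ)) hf.ofReal hg.ofReal
    (Complex.continuous_ofReal.comp hgc) hFg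

lemma le_norm_integral_crossSpectrum_mul_sign {T : ℝ} (hf : Integrable f) (hf0 : ∀ x, 0 ≤ f x)
    (hfs : ∀ x, 1 < |x| → f x = 0) (hg : Integrable g)
    (hFg : Integrable (𝓕 fun x => (g x : ℂ))) (hg0 : ∀ y, 0 ≤ g y) (hgs : ∀ y, y < 2 → g y = 0)
    (hT : 3 ≤ T) (hg1 : ∀ y ∈ Set.Icc 3 T, g y = 1) :
    Real.pi⁻¹ * ((∫ x, f x) * Real.log ((T + 1) / 4)) ≤
      ‖∫ ξ, crossSpectrum f g ξ * (SignType.sign ξ : ℝ)‖ := by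
  have hlog : ∀ x, f x ≠ 0 → Real.log ((T + 1) / 4) ≤ ∫ y, (y - x)⁻¹ * g y := fun x hx => by
    obtain ⟨hx1, hx2⟩ := abs_le.1 (not_lt.1 (mt (hfs x) hx))
    refine le_trans (Real.log_le_log (by linarith) ?_) (log_div_le_integral_inv_sub_mul hg hg0
      one_pos (fun y hy => hgs y (by linarith)) (by linarith) hT hg1)
    rw [div_le_div_iff₀ (by norm_num) (by linarith)]
    nlinarith
  have hsupp : ∀ x y, |y - x| < 1 → f x = 0 ∨ g y = 0 := fun x y hxy => by
    refine or_iff_not_imp_left.2 fun hx => hgs y ?_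
    linarith [(abs_lt.1 hxy).2, (abs_le.1 (not_lt.1 (mt (hfs x) hx))).2]
  simpa only [crossSpectrum, mul_assoc, mul_comm (𝓕 (fun x => (g x : ℂ)) _)] using
    le_norm_integral_fourierInv_mul_sign_mul_fourier hf hf0 hg hFg one_pos hsupp hlog

end CrossSpectrum

lemma integral_comp_pi_mul {ι E : Type*} [Fintype ι] [NormedAddCommGroup E] [NormedSpace ℝ E]
    {a : ι → ℝ} (ha : ∀ i, a i ≠ 0) (Φ : (ι → ℝ) → E) :
    ∫ η, Φ η = |∏ i, a i| • ∫ η : ι → ℝ, Φ fun i => a i * η i := by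
  classical
  have hdet : (Matrix.diagonal a).det ≠ 0 := by
    simpa [Matrix.det_diagonal, Finset.prod_ne_zero_iff] using ha
  have hmap := Real.smul_map_diagonal_volume_pi hdet
  have hemb : MeasurableEmbedding (Matrix.toLin' (Matrix.diagonal a)) :=
    (LinearMap.continuous_of_finiteDimensional _).measurableEmbedding
      (Matrix.mulVec_injective_iff_isUnit.2 ((Matrix.isUnit_iff_isUnit_det _).2 hdet.isUnit))
  conv_lhs => rw [← hmap, integral_smul_measure, hemb.integral_map,
    ENNReal.toReal_ofReal (abs_nonneg _), Matrix.det_diagonal]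
  exact congrArg _ (integral_congr_ae (ae_of_all _ fun η =>
    congrArg Φ (funext (Matrix.mulVec_diagonal a η))))

section TensorForm

variable {m : ℕ}

lemma fourierT_prod (h : Idx m → ℝ → ℝ) (ξ : Idx m → ℝ) :
    fourierT (fun x => ∏ k, h k (x k)) ξ = ∏ k, 𝓕 (fun x => (h k x : ℂ)) (ξ k) := by
  simp only [fourierT, Real.fourier_real_eq_integral_exp_smul, smul_eq_mul]
  rw [← integral_fintype_prod_volume_eq_prod
    (fun k (t : ℝ) => Complex.exp (↑(-2 * Real.pi * t * ξ k) * Complex.I) * (h k t : ℂ))]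
  refine integral_congr_ae (ae_of_all _ fun x => ?_)
  simp only [Finset.prod_mul_distrib, ← Complex.exp_sum, Complex.ofReal_prod]
  congr 2
  simp only [Complex.ofReal_sum, Finset.mul_sum]
  refine Finset.sum_congr rfl fun k _ => ?_
  push_cast
  ring

/-- The matrix `(I, -I)`, for which the form depends on the differences `x⁰ - x¹` only. -/
def diffM (m : ℕ) : Matrix (Fin m) (Idx m) ℝ := Matrix.fromCols 1 (-1)

lemma pv_smul (P : Matrix (Fin m) (Idx m) ℝ) (c : ℝ) (K : (Fin m → ℝ) → ℂ)
    (F : Corner m → (Fin m → ℝ) → ℝ) : pv P (c • K) F = c • pv P K F := by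
  simp only [pv, Pi.smul_apply, mul_smul_comm, integral_smul]

variable {F : Corner m → (Fin m → ℝ) → ℝ} {f g : Fin m → ℝ → ℝ}

lemma pv_diffM_of_prod (K : (Fin m → ℝ) → ℂ) (hF : ∀ x : Idx m → ℝ,
      ∏ j, F j (proj j x) = ∏ i, f i (x (Sum.inl i)) * g i (x (Sum.inr i))) :
    pv (diffM m) K F = ∫ η : Fin m → ℝ, (∏ i, crossSpectrum (f i) (g i) (η i)) * K η := by
  have htensor : (fun x : Idx m → ℝ => ∏ j, F j (proj j x)) =
      fun x => ∏ k, Sum.elim f g k (x k) := by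
    funext x
    rw [hF, Fintype.prod_sum_type, Finset.prod_mul_distrib]
    rfl
  simp only [pv, htensor, fourierT_prod]
  simp [Fintype.prod_sum_type, Finset.prod_mul_distrib, crossSpectrum, diffM,
    Real.fourierInv_eq_fourier_neg, Matrix.transpose_fromCols, Matrix.fromRows_mulVec,
    Matrix.neg_mulVec]

lemma pv_diffM_of_prod_comp_div (K : (Fin m → ℝ) → ℂ) {a : Fin m → ℝ} (ha : ∀ i, 0 < a i)
    (hF : ∀ x : Idx m → ℝ, ∏ j, F j (proj j x) =
      ∏ i, f i (x (Sum.inl i) / a i) * g i (x (Sum.inr i) / a i)) :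
    pv (diffM m) K F = (∏ i, a i) •
      ∫ η : Fin m → ℝ, (∏ i, crossSpectrum (f i) (g i) (η i)) * K fun i => η i / a i := by
  have hpos : 0 < ∏ i, a i := Finset.prod_pos fun i _ => ha i
  rw [pv_diffM_of_prod (f := fun i x => f i (x / a i)) (g := fun i x => g i (x / a i)) K hF,
    integral_comp_pi_mul (fun i => (ha i).ne') fun η =>
    (∏ i, crossSpectrum (f i) (g i) (η i)) * K fun i => η i / a i, abs_of_pos hpos, smul_smul,
    ← integral_smul]
  congr 1 with η
  simp only [crossSpectrum_comp_div _ _ (ha _), mul_div_cancel_left₀ _ (ha _).ne',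
    Finset.prod_mul_distrib, Complex.ofReal_mul, Complex.real_smul, Complex.ofReal_prod]
  ring

/-- The dilation factors `1` in direction `i₀` and `M` in all other directions; the corresponding
rescaling of the kernel flattens it onto the axis `i₀` as `M → ∞`. -/
def stretch (i₀ : Fin m) (M : ℝ) : Fin m → ℝ := Function.update (fun _ => M) i₀ 1

lemma stretch_pos (i₀ : Fin m) {M : ℝ} (hM : 0 < M) (i : Fin m) : 0 < stretch i₀ M i := by
  rcases eq_or_ne i i₀ with rfl | hi <;> simp [stretch, *]

lemma tendsto_riesz_div_stretch (i₀ : Fin m) (η : Fin m → ℝ) :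
    Tendsto (fun M : ℝ => riesz i₀ fun i => η i / stretch i₀ M i) atTop
      (𝓝 ((SignType.sign (η i₀) : ℝ) : ℂ)) := by
  rcases eq_or_ne (η i₀) 0 with h0 | h0
  · simp [riesz, h0]
  have hvec : Tendsto (fun (M : ℝ) i => η i / stretch i₀ M i) atTop
      (𝓝 (Pi.single i₀ (η i₀))) := by
    refine tendsto_pi_nhds.2 fun i => ?_
    rcases eq_or_ne i i₀ with rfl | hi
    · simp [stretch]
    · simpa [stretch, hi] using tendsto_const_nhds.div_atTop tendsto_id
  have hcont : ContinuousAt (riesz i₀) (Pi.single i₀ (η i₀)) :=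
    (contDiffOn_riesz (i := i₀) 0).continuousOn.continuousAt
      (isOpen_compl_singleton.mem_nhds (by simpa using h0))
  rw [← riesz_single (i := i₀)]
  exact hcont.tendsto.comp hvec

lemma tendsto_integral_prod_mul_riesz_div_stretch (i₀ : Fin m) {G : Fin m → ℝ → ℂ}
    (hG : ∀ i, Integrable (G i)) :
    Tendsto (fun M : ℝ => ∫ η : Fin m → ℝ, (∏ i, G i (η i)) *
        riesz i₀ fun i => η i / stretch i₀ M i) atTop
      (𝓝 ((∫ t, G i₀ t * (SignType.sign t : ℝ)) * ∏ i ∈ Finset.univ.erase i₀, ∫ t, G i t)) := by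
  have hint : Integrable fun η : Fin m → ℝ => ∏ i, G i (η i) := Integrable.fintype_prod hG
  have hlim : (∫ t, G i₀ t * (SignType.sign t : ℝ)) * ∏ i ∈ Finset.univ.erase i₀, ∫ t, G i t =
      ∫ η : Fin m → ℝ, (∏ i, G i (η i)) * (SignType.sign (η i₀) : ℝ) := by
    have h := integral_fintype_prod_volume_eq_prod
      fun i t => G i t * if i = i₀ then ((SignType.sign t : ℝ) : ℂ) else 1
    simp only [Finset.prod_mul_distrib, Finset.prod_ite_eq', Finset.mem_univ, if_true] at h
    rw [h, ← Finset.mul_prod_erase _ _ (Finset.mem_univ i₀)]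
    refine congrArg₂ _ (by simp) (Finset.prod_congr rfl fun i hi => ?_)
    simp [Finset.ne_of_mem_erase hi]
  rw [hlim]
  refine tendsto_integral_filter_of_dominated_convergence (fun η => ‖∏ i, G i (η i)‖)
    (Eventually.of_forall fun M => ?_) (Eventually.of_forall fun M => ae_of_all _ fun η => ?_)
    hint.norm (ae_of_all _ fun η => (tendsto_riesz_div_stretch i₀ η).const_mul _)
  · have hdil : Measurable fun (η : Fin m → ℝ) i => η i / stretch i₀ M i := by fun_prop
    exact hint.aestronglyMeasurable.mul ((measurable_riesz i₀).comp hdil).aestronglyMeasurable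
  · rw [norm_mul]
    exact mul_le_of_le_one_right (norm_nonneg _) (norm_riesz_le_one _ _)

end TensorForm

section CornerTensor

variable {m : ℕ}

lemma card_filter_corner (i : Fin m) (b : Fin 2) :
    (Finset.univ.filter fun j : Corner m => j i = b).card = 2 ^ (m - 1) := by
  simpa [Fintype.piFinset_univ] using Fintype.card_filter_piFinset_const_eq_of_mem
    (Finset.univ : Finset (Fin 2)) i (Finset.mem_univ b)

@[to_additive]
lemma prod_corner_apply {M : Type*} [CommMonoid M] (i : Fin m) (φ : Fin 2 → M) :
    ∏ j : Corner m, φ (j i) = (φ 0 * φ 1) ^ 2 ^ (m - 1) := by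
  simp only [← Finset.prod_fiberwise' Finset.univ (fun j : Corner m => j i) φ, Finset.prod_const,
    card_filter_corner, Fin.prod_univ_two, mul_pow]

/-- The tensor product over `i` of the functions `w i (j i)`, dilated by `a i`; these are the
test functions `F_j` to which the form is applied. -/
def cornerTensor (w : Fin m → Fin 2 → ℝ → ℝ) (a : Fin m → ℝ) (j : Corner m) (x : Fin m → ℝ) : ℝ :=
  ∏ i, w i (j i) (x i / a i)

variable {w : Fin m → Fin 2 → ℝ → ℝ} {a : Fin m → ℝ}

lemma prod_cornerTensor_proj (w : Fin m → Fin 2 → ℝ → ℝ) (a : Fin m → ℝ) (x : Idx m → ℝ) :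
    ∏ j, cornerTensor w a j (proj j x) = ∏ i, (w i 0 ^ 2 ^ (m - 1)) (x (Sum.inl i) / a i) *
      (w i 1 ^ 2 ^ (m - 1)) (x (Sum.inr i) / a i) := by
  simp only [cornerTensor, proj, sel]
  rw [Finset.prod_comm]
  refine Finset.prod_congr rfl fun i _ => ?_
  rw [prod_corner_apply i fun b => w i b (x (if b = 0 then Sum.inl i else Sum.inr i) / a i)]
  simp [mul_pow]

lemma contDiff_cornerTensor (hw : ∀ i b, ContDiff ℝ ∞ (w i b)) (j : Corner m) :
    ContDiff ℝ ∞ (cornerTensor w a j) :=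
  contDiff_prod fun i _ => (hw i (j i)).comp (by fun_prop)

lemma hasCompactSupport_cornerTensor (hw : ∀ i b, HasCompactSupport (w i b))
    (ha : ∀ i, a i ≠ 0) (j : Corner m) : HasCompactSupport (cornerTensor w a j) := by
  refine HasCompactSupport.intro (isCompact_univ_pi fun i => (hw i (j i)).image
    (continuous_mul_const (a i))) fun x hx => ?_
  obtain ⟨i, hi⟩ : ∃ i, x i ∉ (· * a i) '' tsupport (w i (j i)) := by
    simpa only [Set.mem_univ_pi, not_forall] using hx
  exact Finset.prod_eq_zero (Finset.mem_univ i) <| image_eq_zero_of_notMem_tsupport fun hmem =>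
    hi ⟨_, hmem, div_mul_cancel₀ _ (ha i)⟩

lemma norm_cornerTensor_le_one (hw : ∀ i b t, ‖w i b t‖ ≤ 1) (j : Corner m) (x : Fin m → ℝ) :
    ‖cornerTensor w a j x‖ ≤ 1 := by
  rw [cornerTensor, norm_prod]
  exact Finset.prod_le_one (fun _ _ => norm_nonneg _) fun i _ => hw i _ _

lemma support_cornerTensor_subset {j : Corner m} (ha : ∀ i, 0 < a i)
    (hw : ∀ i t, 1 < |t| → w i (j i) t = 0) :
    Function.support (cornerTensor w a j) ⊆ Set.Icc (-a) a := fun x hx => by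
  have hle : ∀ i, |x i| ≤ a i := fun i => by
    have h : ¬1 < |x i / a i| := fun h =>
      Finset.prod_ne_zero_iff.1 hx i (Finset.mem_univ i) (hw i _ h)
    rwa [not_lt, abs_div, abs_of_pos (ha i), div_le_one (ha i)] at h
  exact ⟨fun i => (abs_le.1 (hle i)).1, fun i => (abs_le.1 (hle i)).2⟩

end CornerTensor

lemma volume_Icc_neg_self {ι : Type*} [Fintype ι] {a : ι → ℝ} (ha : ∀ i, 0 ≤ a i) :
    volume (Set.Icc (-a) a) = ENNReal.ofReal (2 ^ Fintype.card ι * ∏ i, a i) := by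
  simp only [Real.volume_Icc_pi, Pi.neg_apply, sub_neg_eq_add, ← two_mul]
  rw [← ENNReal.ofReal_prod_of_nonneg fun i _ => by linarith [ha i], Finset.prod_mul_distrib,
    Finset.prod_const, Finset.card_univ]

lemma eLpNorm_le_measure_rpow {α E : Type*} [MeasurableSpace α] [NormedAddCommGroup E]
    {μ : Measure α} {f : α → E} {s : Set α} (p : ℝ≥0∞) (hf : ∀ x, ‖f x‖ ≤ 1)
    (hs : Function.support f ⊆ s) : eLpNorm f p μ ≤ μ s ^ p.toReal⁻¹ := by
  rw [← eLpNorm_restrict_eq_of_support_subset hs]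
  simpa using eLpNorm_le_of_ae_bound (μ := μ.restrict s) (p := p) (ae_of_all _ hf)

section Exponent

variable {m : ℕ} (i₀ : Fin m)

/-- The exponents `2^{m-1}` at the corners with `j(i₀) = 0`, and `∞` elsewhere: the endpoint case
of the range of exponents. -/
def exponent (j : Corner m) : ℝ≥0∞ := if j i₀ = 0 then 2 ^ (m - 1) else ⊤

lemma le_exponent (j : Corner m) : 2 ^ (m - 1) ≤ exponent i₀ j := by
  rw [exponent]
  split_ifs <;> simp

lemma sum_inv_exponent : ∑ j : Corner m, (exponent i₀ j)⁻¹ = 1 := by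
  simp only [exponent]
  rw [sum_corner_apply i₀ fun b => (if b = 0 then (2 : ℝ≥0∞) ^ (m - 1) else ⊤)⁻¹]
  simp [ENNReal.mul_inv_cancel]

lemma prod_eLpNorm_cornerTensor_le {w : Fin m → Fin 2 → ℝ → ℝ} {a : Fin m → ℝ}
    (ha : ∀ i, 0 < a i) (hw : ∀ i b t, ‖w i b t‖ ≤ 1)
    (hsupp : ∀ i b, i ≠ i₀ ∨ b = 0 → ∀ t, 1 < |t| → w i b t = 0) :
    ∏ j, eLpNorm (cornerTensor w a j) (exponent i₀ j) volume ≤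
      ENNReal.ofReal (2 ^ m * ∏ i, a i) := by
  set X := ENNReal.ofReal (2 ^ m * ∏ i, a i)
  have hle : ∀ j, eLpNorm (cornerTensor w a j) (exponent i₀ j) volume ≤
      ![X ^ ((2 ^ (m - 1) : ℕ) : ℝ)⁻¹, 1] (j i₀) := fun j => by
    have h (s : Set (Fin m → ℝ)) :=
      eLpNorm_le_measure_rpow (μ := volume) (s := s) (exponent i₀ j)
        (norm_cornerTensor_le_one (a := a) hw j)
    rcases Fin.exists_fin_two.1 ⟨j i₀, rfl⟩ with hj | hj
    · have hsub := h _ (support_cornerTensor_subset ha fun i => hsupp i (j i) <| by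
        by_cases hi : i = i₀ <;> simp [hi, hj])
      rw [volume_Icc_neg_self fun i => (ha i).le, Fintype.card_fin] at hsub
      change _ ≤ X ^ _ at hsub
      simpa [exponent, hj] using hsub
    · simpa [exponent, hj] using h Set.univ (Set.subset_univ _)
  calc ∏ j, eLpNorm (cornerTensor w a j) (exponent i₀ j) volume
    _ ≤ ∏ j : Corner m, ![X ^ ((2 ^ (m - 1) : ℕ) : ℝ)⁻¹, 1] (j i₀) :=
      Finset.prod_le_prod' fun j _ => hle j
    _ = (X ^ ((2 ^ (m - 1) : ℕ) : ℝ)⁻¹) ^ 2 ^ (m - 1) := by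
      simp [prod_corner_apply]
    _ = X := ENNReal.rpow_inv_natCast_pow (by positivity) X

end Exponent

/-- Smooth compactly supported functions on the line with values in `[0, 1]`. -/
structure IsCutoff (f : ℝ → ℝ) : Prop where
  contDiff : ContDiff ℝ ∞ f
  hasCompactSupport : HasCompactSupport f
  nonneg : ∀ t, 0 ≤ f t
  le_one : ∀ t, f t ≤ 1

namespace IsCutoff

variable {f : ℝ → ℝ}

lemma norm_le_one (hf : IsCutoff f) (t : ℝ) : ‖f t‖ ≤ 1 :=
  (Real.norm_of_nonneg (hf.nonneg t)).trans_le (hf.le_one t)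

lemma integrable (hf : IsCutoff f) : Integrable f :=
  hf.contDiff.continuous.integrable_of_hasCompactSupport hf.hasCompactSupport

lemma integrable_fourier (hf : IsCutoff f) : Integrable (𝓕 fun x => (f x : ℂ)) :=
  integrable_fourier_of_contDiff (Complex.ofRealCLM.contDiff.comp hf.contDiff)
    (hf.hasCompactSupport.comp_left Complex.ofReal_zero)

lemma pow (hf : IsCutoff f) {n : ℕ} (hn : n ≠ 0) : IsCutoff (f ^ n) where
  contDiff := hf.contDiff.pow n
  hasCompactSupport := hf.hasCompactSupport.comp_left (g := (· ^ n)) (zero_pow hn)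
  nonneg t := pow_nonneg (hf.nonneg t) n
  le_one t := pow_le_one₀ (hf.nonneg t) (hf.le_one t)

lemma integral_pos (hf : IsCutoff f) {t : ℝ} (ht : f t ≠ 0) : 0 < ∫ t, f t :=
  hf.contDiff.continuous.integral_pos_of_hasCompactSupport_nonneg_nonzero hf.hasCompactSupport
    hf.nonneg ht

end IsCutoff

lemma exists_isCutoff {a b : ℝ} (hab : a ≤ b) : ∃ f, IsCutoff f ∧ (∀ t ∈ Set.Icc a b, f t = 1) ∧
    ∀ t ∉ Set.Icc (a - 1) (b + 1), f t = 0 := by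
  let f : ContDiffBump ((a + b) / 2) :=
    ⟨(b - a) / 2 + 1 / 2, (b - a) / 2 + 1, by linarith, by linarith⟩
  refine ⟨f, ⟨f.contDiff, f.hasCompactSupport, fun t => f.nonneg, fun t => f.le_one⟩,
    fun t ht => f.one_of_mem_closedBall ?_, fun t ht => f.zero_of_le_dist ?_⟩
  · rw [Metric.mem_closedBall, Real.dist_eq, abs_le]
    constructor <;> simp only [f] <;> linarith [ht.1, ht.2]
  · contrapose! ht
    rw [Real.dist_eq, abs_lt] at ht
    constructor <;> simp only [f] at ht <;> linarith [ht.1, ht.2]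

lemma exists_lt_norm_integral_crossSpectrum_mul_sign {n : ℕ} (hn : n ≠ 0) (k : ℕ) (B : ℝ) :
    ∃ u v, IsCutoff u ∧ IsCutoff v ∧ (∀ t, 1 < |t| → u t = 0) ∧
      B < ‖∫ t, crossSpectrum (u ^ n) (v ^ n) t * (SignType.sign t : ℝ)‖ *
        (∫ t, (u ^ n) t * (u ^ n) t) ^ k := by
  obtain ⟨u, hu, hu1, hu0⟩ := exists_isCutoff le_rfl (a := 0)
  replace hu1 : u 0 = 1 := hu1 0 (by simp)
  replace hu0 : ∀ t, 1 < |t| → u t = 0 := fun t ht => hu0 t fun hmem =>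
    ht.not_ge (abs_le.2 (by simpa using hmem))
  have hU : 0 < ∫ t, (u ^ n) t := (hu.pow hn).integral_pos (t := 0) (by simp [hu1])
  have hS : 0 < ∫ t, (u ^ n) t * (u ^ n) t := by
    have h := ((hu.pow hn).pow two_ne_zero).integral_pos (t := 0) (by simp [hu1])
    simpa [sq] using h
  have hlog : Tendsto (fun T : ℝ => Real.pi⁻¹ * ((∫ t, (u ^ n) t) * Real.log ((T + 1) / 4)) *
      (∫ t, (u ^ n) t * (u ^ n) t) ^ k) atTop atTop :=
    Tendsto.atTop_mul_const (by positivity) <| Tendsto.const_mul_atTop (by positivity) <|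
      Tendsto.const_mul_atTop hU <| Real.tendsto_log_atTop.comp <|
        (tendsto_atTop_add_const_right _ _ tendsto_id).atTop_div_const (by norm_num)
  obtain ⟨T, hTB, hT⟩ := ((hlog.eventually_gt_atTop B).and (eventually_ge_atTop 3)).exists
  obtain ⟨v, hv, hv1, hv0⟩ := exists_isCutoff hT
  refine ⟨u, v, hu, hv, hu0, hTB.trans_le ?_⟩
  gcongr
  refine le_norm_integral_crossSpectrum_mul_sign (hu.pow hn).integrable (hu.pow hn).nonneg
    (fun t ht => by simp [hu0 t ht, hn]) (hv.pow hn).integrable (hv.pow hn).integrable_fourier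
    (hv.pow hn).nonneg (fun t ht => ?_) hT fun t ht => by simp [hv1 t ht]
  have hmem : t ∉ Set.Icc (3 - 1) (T + 1) := fun h => by linarith [h.1]
  simp [hv0 t hmem, hn]

section UnboundedForm

variable {m : ℕ}

lemma tendsto_pv_cornerTensor {w : Fin m → Fin 2 → ℝ → ℝ} (hw : ∀ i b, IsCutoff (w i b))
    (i₀ : Fin m) :
    Tendsto (fun M : ℝ => (∏ i, stretch i₀ M i)⁻¹ •
        pv (diffM m) (riesz i₀) (cornerTensor w (stretch i₀ M))) atTop
      (𝓝 ((∫ t, crossSpectrum (w i₀ 0 ^ 2 ^ (m - 1)) (w i₀ 1 ^ 2 ^ (m - 1)) t *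
          (SignType.sign t : ℝ)) * ∏ i ∈ Finset.univ.erase i₀,
        ((∫ t, (w i 0 ^ 2 ^ (m - 1)) t * (w i 1 ^ 2 ^ (m - 1)) t : ℝ) : ℂ))) := by
  have hpow : ∀ i b, IsCutoff (w i b ^ 2 ^ (m - 1)) := fun i b => (hw i b).pow (by positivity)
  have hlim := tendsto_integral_prod_mul_riesz_div_stretch i₀ fun i =>
    integrable_crossSpectrum (hpow i 0).integrable (hpow i 1).integrable_fourier
  simp only [integral_crossSpectrum (hpow _ 0).integrable (hpow _ 1).integrable
    (hpow _ 1).contDiff.continuous (hpow _ 1).integrable_fourier] at hlim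
  refine hlim.congr' ((eventually_gt_atTop 0).mono fun M hM => ?_)
  have hpos : 0 < ∏ i, stretch i₀ M i := Finset.prod_pos fun i _ => stretch_pos i₀ hM i
  simp only [pv_diffM_of_prod_comp_div _ (stretch_pos i₀ hM) (prod_cornerTensor_proj w _),
    inv_smul_smul₀ hpos.ne']

lemma exists_lt_norm_pv_cornerTensor (i₀ : Fin m) (B : ℝ) :
    ∃ (w : Fin m → Fin 2 → ℝ → ℝ) (a : Fin m → ℝ), (∀ i b, IsCutoff (w i b)) ∧
      (∀ i b, i ≠ i₀ ∨ b = 0 → ∀ t, 1 < |t| → w i b t = 0) ∧ (∀ i, 0 < a i) ∧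
      B * ∏ i, a i < ‖pv (diffM m) (riesz i₀) (cornerTensor w a)‖ := by
  obtain ⟨u, v, hu, hv, hu0, hB⟩ := exists_lt_norm_integral_crossSpectrum_mul_sign
    (n := 2 ^ (m - 1)) (by positivity) (m - 1) B
  let w : Fin m → Fin 2 → ℝ → ℝ := fun i b => if i ≠ i₀ ∨ b = 0 then u else v
  have hw : ∀ i b, IsCutoff (w i b) := fun i b => by
    dsimp only [w]
    split_ifs
    exacts [hu, hv]
  have hprod : ∏ i ∈ Finset.univ.erase i₀,
      ((∫ t, (w i 0 ^ 2 ^ (m - 1)) t * (w i 1 ^ 2 ^ (m - 1)) t : ℝ) : ℂ) =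
        ((∫ t, (u ^ 2 ^ (m - 1)) t * (u ^ 2 ^ (m - 1)) t : ℝ) : ℂ) ^ (m - 1) := by
    have hcard : (Finset.univ.erase i₀).card = m - 1 := by simp
    rw [← hcard]
    exact Finset.prod_eq_pow_card fun i hi => by simp [w, Finset.ne_of_mem_erase hi]
  have hlim := (tendsto_pv_cornerTensor hw i₀).norm
  rw [hprod, norm_mul, norm_pow, Complex.norm_real, Real.norm_of_nonneg
    (integral_nonneg fun t => mul_self_nonneg _)] at hlim
  obtain ⟨M, hMB, hM⟩ := ((hlim.eventually (lt_mem_nhds (by simpa [w] using hB))).and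
    (eventually_gt_atTop 0)).exists
  have hpos : 0 < ∏ i, stretch i₀ M i := Finset.prod_pos fun i _ => stretch_pos i₀ hM i
  refine ⟨w, stretch i₀ M, hw, fun i b h t ht => by simp [w, h, hu0 t ht], stretch_pos i₀ hM, ?_⟩
  rwa [norm_smul, norm_inv, Real.norm_of_nonneg hpos.le, ← div_eq_inv_mul, lt_div_iff₀ hpos] at hMB

/-- The form with matrix `P` and multiplier `Khat` satisfies no `L^p` bound on the test functions,
whatever the constant. -/
def UnboundedForm (p : Corner m → ℝ≥0∞) (P : Matrix (Fin m) (Idx m) ℝ)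
    (Khat : (Fin m → ℝ) → ℂ) : Prop :=
  ∀ C : ℝ≥0, ∃ F : Corner m → (Fin m → ℝ) → ℝ,
    (∀ j, ContDiff ℝ ∞ (F j) ∧ HasCompactSupport (F j)) ∧
    C * (∏ j, eLpNorm (F j) (p j) volume) < ENNReal.ofReal ‖pv P Khat F‖

lemma UnboundedForm.const_smul {p : Corner m → ℝ≥0∞} {P : Matrix (Fin m) (Idx m) ℝ}
    {Khat : (Fin m → ℝ) → ℂ} (h : UnboundedForm p P Khat) {c : ℝ} (hc : 0 < c) :
    UnboundedForm p P (c • Khat) := fun C => by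
  obtain ⟨F, hF, hlt⟩ := h (C / c.toNNReal)
  refine ⟨F, hF, ?_⟩
  have hc' : c.toNNReal ≠ 0 := by simpa using hc
  have hcoe : ENNReal.ofReal c = c.toNNReal := rfl
  rw [pv_smul, norm_smul, Real.norm_of_nonneg hc.le, ENNReal.ofReal_mul hc.le, hcoe]
  calc (C : ℝ≥0∞) * ∏ j, eLpNorm (F j) (p j) volume
    _ = c.toNNReal * ((C / c.toNNReal : ℝ≥0) * ∏ j, eLpNorm (F j) (p j) volume) := by
      rw [← mul_assoc, ← ENNReal.coe_mul, mul_div_cancel₀ _ hc']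
    _ < c.toNNReal * ENNReal.ofReal ‖pv P Khat F‖ :=
      (ENNReal.mul_lt_mul_iff_right (by simpa using hc) ENNReal.coe_ne_top).2 hlt

lemma unboundedForm_riesz (i₀ : Fin m) : UnboundedForm (exponent i₀) (diffM m) (riesz i₀) :=
    fun C => by
  obtain ⟨w, a, hw, hsupp, ha, hlt⟩ := exists_lt_norm_pv_cornerTensor i₀ (C * 2 ^ m)
  have hpos : 0 ≤ ∏ i, a i := Finset.prod_nonneg fun i _ => (ha i).le
  refine ⟨cornerTensor w a, fun j => ⟨contDiff_cornerTensor (fun i b => (hw i b).contDiff) j,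
    hasCompactSupport_cornerTensor (fun i b => (hw i b).hasCompactSupport)
      (fun i => (ha i).ne') j⟩, ?_⟩
  calc (C : ℝ≥0∞) * ∏ j, eLpNorm (cornerTensor w a j) (exponent i₀ j) volume
    _ ≤ C * ENNReal.ofReal (2 ^ m * ∏ i, a i) := by
      gcongr
      exact prod_eLpNorm_cornerTensor_le i₀ ha (fun i b => (hw i b).norm_le_one) hsupp
    _ = ENNReal.ofReal (C * 2 ^ m * ∏ i, a i) := by
      rw [← ENNReal.ofReal_coe_nnreal, ← ENNReal.ofReal_mul C.coe_nonneg, mul_assoc]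
    _ < ENNReal.ofReal ‖pv (diffM m) (riesz i₀) (cornerTensor w a)‖ :=
      (ENNReal.ofReal_lt_ofReal_iff_of_nonneg (by positivity)).2 hlt

end UnboundedForm

section Regular

variable {m : ℕ}

lemma projM_mul_transpose_diffM (j : Corner m) :
    projM j * (diffM m).transpose = Matrix.diagonal fun i => if j i = 0 then 1 else -1 := by
  ext i k
  simp only [Matrix.mul_apply, projM, Matrix.of_apply, ite_mul, one_mul, zero_mul,
    Finset.sum_ite_eq', Finset.mem_univ, if_true, Matrix.transpose_apply]
  by_cases hj : j i = 0 <;>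
    simp [sel, hj, diffM, Matrix.one_apply, Matrix.diagonal_apply, eq_comm, apply_ite]

lemma isReg_one_diagonal {ε : Fin m → ℝ} (hε : ∀ i, |ε i| = 1) : IsReg 1 (Matrix.diagonal ε) := by
  have hdet : |(Matrix.diagonal ε).det| = 1 := by
    rw [Matrix.det_diagonal, Finset.abs_prod, Finset.prod_eq_one fun i _ => hε i]
  refine ⟨ContinuousLinearMap.opNorm_le_bound _ zero_le_one fun x => ?_, ?_, ?_⟩
  · simp [EuclideanSpace.norm_eq, Matrix.toLpLin_apply, Matrix.mulVec_diagonal, hε]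
  · rw [← abs_pos, hdet]
    exact one_pos
  · rw [hdet, inv_one]

lemma isReg_one_projM_mul_transpose_diffM (j : Corner m) :
    IsReg 1 (projM j * (diffM m).transpose) := by
  rw [projM_mul_transpose_diffM]
  exact isReg_one_diagonal fun i => by split_ifs <;> simp

lemma IsReg.mono {Δ Δ' : ℝ} {A : Matrix (Fin m) (Fin m) ℝ} (h : IsReg Δ A) (hΔ : Δ ≤ Δ') :
    IsReg Δ' A :=
  ⟨h.1.trans hΔ, h.2.1, h.2.2.trans hΔ⟩

end Regular

theorem statement4_general (m : ℕ) (hm : 0 < m) (n : ℕ) :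
    ∃ p : Corner m → ℝ≥0∞, (∀ j, 2 ^ (m - 1) ≤ p j) ∧ (∑ j : Corner m, (p j)⁻¹ = 1) ∧
      ∃ P : Matrix (Fin m) (Idx m) ℝ, (∀ j : Corner m, IsReg 1 (projM j * P.transpose)) ∧
        ∃ Khat : (Fin m → ℝ) → ℂ, IsCZ n Khat ∧ UnboundedForm p P Khat := by
  let i₀ : Fin m := ⟨0, hm⟩
  obtain ⟨c, hc, hcz⟩ := exists_isCZ_smul (contDiffOn_riesz (i := i₀) n)
    fun t ht η => riesz_smul i₀ ht η
  exact ⟨exponent i₀, le_exponent i₀, sum_inv_exponent i₀, diffM m,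
    isReg_one_projM_mul_transpose_diffM, c • riesz i₀, hcz, (unboundedForm_riesz i₀).const_smul hc⟩

/-- Theorem 5 (sharpness of the threshold `2^{m−1}`). -/
theorem statement4 (m : ℕ) (hm : 2 ≤ m) (q : ℝ) (hq : q < 2^(m-1)) :
    ∃ Δ : ℝ, 1 < Δ ∧
    ∃ p : Corner m → ℝ≥0∞,
      (∀ j, ENNReal.ofReal q < p j) ∧ (∑ j : Corner m, (p j)⁻¹ = 1) ∧
      ∃ P : Matrix (Fin m) (Idx m) ℝ,
        (∀ j : Corner m, IsReg Δ (projM j * P.transpose)) ∧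
        ∃ Khat : (Fin m → ℝ) → ℂ, IsCZ (2^(6*m)) Khat ∧
          ∀ C : ℝ≥0, ∃ F : Corner m → (Fin m → ℝ) → ℝ,
            (∀ j, ContDiff ℝ (⊤ : ℕ∞) (F j) ∧ HasCompactSupport (F j)) ∧
            C * (∏ j : Corner m, eLpNorm (F j) (p j) volume) <
              ENNReal.ofReal ‖pv P Khat F‖ := by
  obtain ⟨p, hp, hsum, P, hreg, Khat, hcz, hunb⟩ :=
    statement4_general m (by lia) (2 ^ (6 * m))
  have hq' : ENNReal.ofReal q < 2 ^ (m - 1) := by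
    rw [← ENNReal.ofReal_ofNat 2, ← ENNReal.ofReal_pow zero_le_two]
    exact (ENNReal.ofReal_lt_ofReal_iff (by positivity)).2 hq
  exact ⟨2, one_lt_two, p, fun j => hq'.trans_le (hp j), hsum, P,
    fun j => (hreg j).mono one_le_two, Khat, hcz, hunb⟩

end SBL
end
end

section
/- Let m ≥ 2 be an integer and α > 0. Then there is a constant C such that for every measurable function F on ℝ^m belonging to L^{2^{m−1}}(ℝ^m) and every λ > 0, the Lebesgue measure of the set {x ∈ ℝ^m : M_α(F)(x) > λ} is at most C λ^{−2^{m−1}} ‖F‖_{L^{2^{m−1}}}^{2^{m−1}}; that is, the modified strong maximal operator M_α is of weak type 2^{m−1}. -/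
open MeasureTheory Matrix
open scoped ENNReal NNReal BigOperators

noncomputable section

namespace SBL

/-!
Fix a dyadic shape: the side lengths of a box are, up to a factor two and a common dilation, the
numbers `2 ^ (-n i)`. Boxes of one shape form an engulfing family, because a box that meets another
one of at least half its volume lies in a fixed dilate of it. By Vitali's covering argument the
maximal function over boxes of shape `n` is therefore of weak type `(1, 1)` with a constant that
does not depend on `n`. A box of shape `n` normalised by its longest side has eccentricity at most
`2 ^ (-n i)` for every `i`, so its weight `ε_R ^ α` is at most `∏ i, 2 ^ (-α n i / m)`, which is
summable over `n`. Summing the weak type bounds over all shapes, and applying the result to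
`|F| ^ 2 ^ (m - 1)`, gives the estimate.
-/

section EngulfingFamily

variable {X : Type*} [MeasurableSpace X] {μ : Measure X} {𝓑 𝓢 : Set (Set X)} {K : ℝ≥0∞}

/-- The uncentred maximal function of `f` over the family of sets `𝓑`. -/
def maximalFunction (μ : Measure X) (𝓑 : Set (Set X)) (f : X → ℝ≥0∞) (x : X) : ℝ≥0∞ :=
  ⨆ s ∈ 𝓑, ⨆ _ : x ∈ s, ⨍⁻ y in s, f y ∂μ

/-- A family of sets satisfies the engulfing condition with constant `K` if each member `s` has an
enlargement, of measure at most `K * μ s`, that contains all members which meet `s` and have at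
most twice its measure. This is what Vitali's covering argument uses about balls; measuring the
size of a set by `μ` avoids a separate notion of radius. -/
structure IsEngulfing (μ : Measure X) (𝓑 : Set (Set X)) (K : ℝ≥0∞) : Prop where
  measurableSet : ∀ s ∈ 𝓑, MeasurableSet s
  measure_ne_zero : ∀ s ∈ 𝓑, μ s ≠ 0
  measure_ne_top : ∀ s ∈ 𝓑, μ s ≠ ∞
  exists_enlargement : ∀ s ∈ 𝓑, ∃ s', μ s' ≤ K * μ s ∧
    ∀ t ∈ 𝓑, (t ∩ s).Nonempty → μ t ≤ 2 * μ s → t ⊆ s'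

lemma IsEngulfing.mono (h : IsEngulfing μ 𝓑 K) (h𝓢 : 𝓢 ⊆ 𝓑) : IsEngulfing μ 𝓢 K where
  measurableSet s hs := h.measurableSet s (h𝓢 hs)
  measure_ne_zero s hs := h.measure_ne_zero s (h𝓢 hs)
  measure_ne_top s hs := h.measure_ne_top s (h𝓢 hs)
  exists_enlargement s hs :=
    let ⟨s', hμ, hs'⟩ := h.exists_enlargement s (h𝓢 hs)
    ⟨s', hμ, fun t ht => hs' t (h𝓢 ht)⟩

lemma IsEngulfing.countable_of_pairwiseDisjoint [SFinite μ] (h : IsEngulfing μ 𝓑 K)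
    (hdisj : 𝓑.PairwiseDisjoint id) : 𝓑.Countable := by
  have hpos := Measure.countable_meas_pos_of_disjoint_iUnion (μ := μ)
    (As := fun s : 𝓑 => (s : Set X)) (fun s => h.measurableSet s s.2)
    fun s t hst => hdisj s.2 t.2 (Subtype.coe_injective.ne hst)
  have huniv : {s : 𝓑 | 0 < μ s} = Set.univ :=
    Set.eq_univ_of_forall fun s => pos_iff_ne_zero.2 (h.measure_ne_zero s s.2)
  rwa [huniv, Set.countable_univ_iff] at hpos

lemma IsEngulfing.exists_pairwiseDisjoint_subset [SFinite μ] (h : IsEngulfing μ 𝓑 K)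
    {R : ℝ≥0∞} (hR : R ≠ ∞) (hle : ∀ s ∈ 𝓑, μ s ≤ R) :
    ∃ 𝓤 ⊆ 𝓑, 𝓤.Countable ∧ 𝓤.PairwiseDisjoint id ∧ μ (⋃₀ 𝓑) ≤ K * ∑' s : 𝓤, μ s := by
  obtain ⟨𝓤, h𝓤, hdisj, hcover⟩ :=
    Vitali.exists_disjoint_subfamily_covering_enlargement id 𝓑 μ.real 2 one_lt_two
      (fun _ _ => measureReal_nonneg) R.toReal (fun s hs => ENNReal.toReal_mono hR (hle s hs))
      (fun s hs => nonempty_of_measure_ne_zero (h.measure_ne_zero s hs))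
  choose! enl measure_enl subset_enl using h.exists_enlargement
  have hcount := (h.mono h𝓤).countable_of_pairwiseDisjoint hdisj
  refine ⟨𝓤, h𝓤, hcount, hdisj, ?_⟩
  have hsub : ⋃₀ 𝓑 ⊆ ⋃ s ∈ 𝓤, enl s := Set.sUnion_subset fun t ht => by
    obtain ⟨s, hs, hts, hμ⟩ := hcover t ht
    refine (subset_enl s (h𝓤 hs) t ht hts ?_).trans (Set.subset_biUnion_of_mem hs)
    rw [← ENNReal.toReal_le_toReal (h.measure_ne_top t ht)
      (ENNReal.mul_ne_top ENNReal.ofNat_ne_top (h.measure_ne_top s (h𝓤 hs)))]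
    rwa [ENNReal.toReal_mul, ENNReal.toReal_ofNat]
  calc μ (⋃₀ 𝓑) ≤ ∑' s : 𝓤, μ (enl s) := (measure_mono hsub).trans (measure_biUnion_le μ hcount _)
    _ ≤ ∑' s : 𝓤, K * μ s := ENNReal.tsum_le_tsum fun s => measure_enl s (h𝓤 s.2)
    _ = K * ∑' s : 𝓤, μ s := ENNReal.tsum_mul_left

lemma IsEngulfing.mul_measure_sUnion_le [SFinite μ] (h : IsEngulfing μ 𝓑 K)
    {f : X → ℝ≥0∞} (hf : ∫⁻ x, f x ∂μ ≠ ∞) {c : ℝ≥0∞}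
    (hc : ∀ s ∈ 𝓑, c * μ s ≤ ∫⁻ x in s, f x ∂μ) :
    c * μ (⋃₀ 𝓑) ≤ K * ∫⁻ x, f x ∂μ := by
  rcases eq_or_ne c 0 with rfl | hc0
  · simp only [zero_mul, zero_le]
  have hle : ∀ s ∈ 𝓑, μ s ≤ (∫⁻ x, f x ∂μ) / c := fun s hs => by
    rw [ENNReal.le_div_iff_mul_le (.inl hc0) (.inr hf), mul_comm]
    exact (hc s hs).trans (setLIntegral_le_lintegral s f)
  obtain ⟨𝓤, h𝓤, hcount, hdisj, hcover⟩ :=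
    h.exists_pairwiseDisjoint_subset (ENNReal.div_ne_top hf hc0) hle
  calc c * μ (⋃₀ 𝓑) ≤ c * (K * ∑' s : 𝓤, μ s) := by gcongr
    _ = K * ∑' s : 𝓤, c * μ s := by rw [ENNReal.tsum_mul_left, mul_left_comm]
    _ ≤ K * ∑' s : 𝓤, ∫⁻ x in s, f x ∂μ := by gcongr with s; exact hc s (h𝓤 s.2)
    _ = K * ∫⁻ x in ⋃ s ∈ 𝓤, s, f x ∂μ := by
      rw [lintegral_biUnion hcount (fun s hs => h.measurableSet s (h𝓤 hs)) hdisj]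
    _ ≤ K * ∫⁻ x, f x ∂μ := by gcongr; exact Measure.restrict_le_self

theorem IsEngulfing.mul_measure_lt_maximalFunction_le [SFinite μ] (h : IsEngulfing μ 𝓑 K)
    {f : X → ℝ≥0∞} (hf : ∫⁻ x, f x ∂μ ≠ ∞) (c : ℝ≥0∞) :
    c * μ {x | c < maximalFunction μ 𝓑 f x} ≤ K * ∫⁻ x, f x ∂μ := by
  have hset : {x | c < maximalFunction μ 𝓑 f x} = ⋃₀ {s ∈ 𝓑 | c < ⨍⁻ y in s, f y ∂μ} := by
    ext x
    simp only [maximalFunction, lt_iSup_iff, Set.mem_ofPred_eq, Set.mem_sUnion]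
    tauto
  rw [hset]
  refine (h.mono (Set.sep_subset _ _)).mul_measure_sUnion_le hf fun s ⟨_, hlt⟩ => ?_
  rw [setLAverage_eq] at hlt
  exact ENNReal.mul_le_of_le_div hlt.le

end EngulfingFamily

lemma mul_measure_lt_iSup_mul_le {X κ : Type*} [MeasurableSpace X] {μ : Measure X} [Countable κ]
    {g : κ → X → ℝ≥0∞} {A : ℝ≥0∞} (hg : ∀ n c, c * μ {x | c < g n x} ≤ A) (w : κ → ℝ≥0)
    (c : ℝ≥0∞) :
    c * μ {x | c < ⨆ n, w n * g n x} ≤ (∑' n, (w n : ℝ≥0∞)) * A := by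
  have hweighted (n : κ) : c * μ {x | c < w n * g n x} ≤ w n * A := by
    rcases eq_or_ne (w n) 0 with hw | hw
    · simp [hw]
    have hw' : (w n : ℝ≥0∞) ≠ 0 := ENNReal.coe_ne_zero.2 hw
    calc c * μ {x | c < w n * g n x}
        = w n * (c / w n * μ {x | c / w n < g n x}) := by
          simp only [ENNReal.div_lt_iff (.inl hw') (.inl ENNReal.coe_ne_top), mul_comm (g n _),
            ← mul_assoc, ENNReal.mul_div_cancel hw' ENNReal.coe_ne_top]
      _ ≤ w n * A := by gcongr; exact hg n _
  have hset : {x | c < ⨆ n, w n * g n x} = ⋃ n, {x | c < w n * g n x} := by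
    ext x
    simp only [lt_iSup_iff, Set.mem_ofPred_eq, Set.mem_iUnion]
  calc c * μ {x | c < ⨆ n, w n * g n x} ≤ c * ∑' n, μ {x | c < w n * g n x} := by
        rw [hset]; gcongr; exact measure_iUnion_le _
    _ = ∑' n, c * μ {x | c < w n * g n x} := ENNReal.tsum_mul_left.symm
    _ ≤ ∑' n, w n * A := ENNReal.tsum_le_tsum hweighted
    _ = (∑' n, (w n : ℝ≥0∞)) * A := ENNReal.tsum_mul_right

lemma tsum_prod_eq_prod_tsum {κ : Type*} {m : ℕ} (f : Fin m → κ → ℝ≥0∞) :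
    ∑' n : Fin m → κ, ∏ i, f i (n i) = ∏ i, ∑' k, f i k := by
  induction m with
  | zero => simp
  | succ m ih =>
    rw [← (Fin.consEquiv fun _ : Fin (m + 1) => κ).tsum_eq, ENNReal.tsum_prod']
    simp only [Fin.consEquiv, Equiv.coe_fn_mk, Fin.prod_univ_succ, Fin.cons_zero, Fin.cons_succ,
      ENNReal.tsum_mul_left, ih, ENNReal.tsum_mul_right]

lemma rpow_le_prod_rpow {ι : Type*} [Fintype ι] [Nonempty ι] {e α : ℝ} (he : 0 ≤ e) (hα : 0 ≤ α)
    {s : ι → ℝ} (hs : ∀ i, e ≤ s i) : e ^ α ≤ ∏ i, s i ^ (α / Fintype.card ι) :=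
  calc e ^ α = ∏ _i : ι, e ^ (α / Fintype.card ι) := by
        rw [Finset.prod_const, Finset.card_univ, ← Real.rpow_mul_natCast he,
          div_mul_cancel₀ α (Nat.cast_ne_zero.2 Fintype.card_ne_zero)]
    _ ≤ ∏ i, s i ^ (α / Fintype.card ι) := by gcongr with i; exact hs i

section BoxesOfShape

variable {ι : Type*} [Fintype ι] {r a b a' b' : ι → ℝ}

/-- The boxes whose side lengths are, up to a factor two, those of some dilate of a box with side
lengths `r`. -/
def boxesOfShape (r : ι → ℝ) : Set (Set (ι → ℝ)) :=
  {s | ∃ a b : ι → ℝ, ∃ L > 0, s = Set.Icc a b ∧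
    ∀ i, r i * L ≤ 2 * (b i - a i) ∧ b i - a i ≤ r i * L}

lemma Icc_subset_Icc_sub_add {E : Type*} [AddCommGroup E] [PartialOrder E] [IsOrderedAddMonoid E]
    {a b a' b' d : E} (hmeet : (Set.Icc a b ∩ Set.Icc a' b').Nonempty) (hd : b - a ≤ d) :
    Set.Icc a b ⊆ Set.Icc (a' - d) (b' + d) := by
  obtain ⟨y, ⟨hay, hyb⟩, hay', hyb'⟩ := hmeet
  refine Set.Icc_subset_Icc (sub_le_iff_le_add.2 ?_) ?_
  · calc a' ≤ b := hay'.trans hyb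
      _ ≤ a + d := sub_le_iff_le_add'.1 hd
  · calc b ≤ a + d := sub_le_iff_le_add'.1 hd
      _ ≤ b' + d := by gcongr; exact hay.trans hyb'

lemma volume_Icc_sub_smul_add_smul (a b : ι → ℝ) {k : ℝ} (hk : 0 ≤ k) :
    volume (Set.Icc (a - k • (b - a)) (b + k • (b - a))) =
      ENNReal.ofReal (1 + 2 * k) ^ Fintype.card ι * volume (Set.Icc a b) := by
  rw [Real.volume_Icc_pi, Real.volume_Icc_pi, ← Finset.card_univ, ← Finset.prod_const,
    ← Finset.prod_mul_distrib]
  refine Finset.prod_congr rfl fun i _ => ?_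
  rw [← ENNReal.ofReal_mul (by positivity)]
  simp only [Pi.add_apply, Pi.sub_apply, Pi.smul_apply, smul_eq_mul]
  ring_nf

lemma volume_Icc_ne_zero (hab : ∀ i, a i < b i) : volume (Set.Icc a b) ≠ 0 := by
  rw [Real.volume_Icc_pi]
  exact Finset.prod_ne_zero_iff.2 fun i _ => (ENNReal.ofReal_pos.2 (sub_pos.2 (hab i))).ne'

lemma exists_sub_le_two_mul_sub_of_volume_le [Nonempty ι] (hab' : ∀ i, a' i < b' i)
    (hvol : volume (Set.Icc a b) ≤ 2 * volume (Set.Icc a' b')) :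
    ∃ i, b i - a i ≤ 2 * (b' i - a' i) := by
  by_contra! hlt
  have hpos' (i) : 0 < b' i - a' i := sub_pos.2 (hab' i)
  have hpos (i) : 0 < b i - a i := by linarith [hpos' i, hlt i]
  have hprod : ∏ i, (b i - a i) ≤ 2 * ∏ i, (b' i - a' i) := by
    rwa [Real.volume_Icc_pi, Real.volume_Icc_pi,
      ← ENNReal.ofReal_prod_of_nonneg fun i _ => (hpos i).le,
      ← ENNReal.ofReal_prod_of_nonneg fun i _ => (hpos' i).le, ← ENNReal.ofReal_ofNat 2,
      ← ENNReal.ofReal_mul zero_le_two, ENNReal.ofReal_le_ofReal_iff] at hvol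
    exact mul_nonneg zero_le_two (Finset.prod_nonneg fun i _ => (hpos' i).le)
  refine hprod.not_gt ?_
  calc 2 * ∏ i, (b' i - a' i) ≤ 2 ^ Fintype.card ι * ∏ i, (b' i - a' i) :=
        mul_le_mul_of_nonneg_right (le_self_pow₀ one_le_two Fintype.card_ne_zero)
          (Finset.prod_nonneg fun i _ => (hpos' i).le)
    _ = ∏ i, 2 * (b' i - a' i) := by
        rw [Finset.prod_mul_distrib, Finset.prod_const, Finset.card_univ]
    _ < ∏ i, (b i - a i) :=
        Finset.prod_lt_prod_of_nonempty (fun i _ => mul_pos two_pos (hpos' i)) (fun i _ => hlt i)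
          Finset.univ_nonempty

/-- Some side of the first box is at most twice the corresponding side of the second one, and
comparability with `r` transfers this to all sides at the cost of a factor four. -/
lemma sub_le_smul_sub_of_volume_le [Nonempty ι] (hr : ∀ i, 0 < r i) {L L' : ℝ} (hL' : 0 < L')
    (hab : ∀ i, r i * L ≤ 2 * (b i - a i) ∧ b i - a i ≤ r i * L)
    (hab' : ∀ i, r i * L' ≤ 2 * (b' i - a' i) ∧ b' i - a' i ≤ r i * L')
    (hvol : volume (Set.Icc a b) ≤ 2 * volume (Set.Icc a' b')) :
    b - a ≤ (8 : ℝ) • (b' - a') := by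
  obtain ⟨j, hj⟩ := exists_sub_le_two_mul_sub_of_volume_le
    (fun i => by linarith [mul_pos (hr i) hL', (hab' i).1]) hvol
  have hLL' : L ≤ 4 * L' := by
    refine le_of_mul_le_mul_left ?_ (hr j)
    linarith [(hab j).1, (hab' j).2]
  intro i
  calc b i - a i ≤ r i * (4 * L') := (hab i).2.trans (by gcongr; exact (hr i).le)
    _ ≤ 8 * (b' i - a' i) := by linarith [(hab' i).1]

lemma isEngulfing_boxesOfShape [Nonempty ι] (hr : ∀ i, 0 < r i) :
    IsEngulfing volume (boxesOfShape r) (17 ^ Fintype.card ι) where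
  measurableSet := by
    rintro _ ⟨a, b, -, -, rfl, -⟩
    exact measurableSet_Icc
  measure_ne_zero := by
    rintro _ ⟨a, b, L, hL, rfl, hab⟩
    exact volume_Icc_ne_zero fun i => by linarith [mul_pos (hr i) hL, (hab i).1]
  measure_ne_top := by
    rintro _ ⟨a, b, -, -, rfl, -⟩
    exact isCompact_Icc.measure_ne_top
  exists_enlargement := by
    rintro _ ⟨a', b', L', hL', rfl, hab'⟩
    refine ⟨Set.Icc (a' - (8 : ℝ) • (b' - a')) (b' + (8 : ℝ) • (b' - a')), ?_, ?_⟩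
    · rw [volume_Icc_sub_smul_add_smul a' b' (by norm_num)]
      norm_num
    · rintro _ ⟨a, b, L, -, rfl, hab⟩ hmeet hvol
      exact Icc_subset_Icc_sub_add hmeet (sub_le_smul_sub_of_volume_le hr hL' hab hab' hvol)

end BoxesOfShape

section EccentricityWeight

variable {m : ℕ} {a b : Fin m → ℝ}

/-- The maximal function over all axis-parallel boxes, with the average over the box `R` weighted
by `ε_R ^ α`. For `f = |F| ^ 2 ^ (m - 1)` it is the power `2 ^ (m - 1)` of the operator `M_α`. -/
def eccMaximal (α : ℝ) (f : (Fin m → ℝ) → ℝ≥0∞) (x : Fin m → ℝ) : ℝ≥0∞ :=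
  ⨆ (a : Fin m → ℝ) (b : Fin m → ℝ) (_ : ∀ i, a i < b i) (_ : x ∈ box a b),
    ENNReal.ofReal (ecc a b ^ α) * ⨍⁻ y in box a b, f y ∂volume

lemma box_eq_Icc (a b : Fin m → ℝ) : box a b = Set.Icc a b := by
  ext x
  simp only [box, Set.mem_ofPred_eq, Set.mem_Icc, Pi.le_def, forall_and]

lemma ecc_nonneg (hab : ∀ i, a i < b i) : 0 ≤ ecc a b :=
  div_nonneg (Real.iInf_nonneg fun i => (sub_pos.2 (hab i)).le)
    (Real.iSup_nonneg fun i => (sub_pos.2 (hab i)).le)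

lemma ecc_le_div_iSup (hab : ∀ i, a i < b i) (i : Fin m) :
    ecc a b ≤ (b i - a i) / ⨆ k, (b k - a k) :=
  div_le_div_of_nonneg_right (ciInf_le (Set.finite_range _).bddBelow i)
    (Real.iSup_nonneg fun k => (sub_pos.2 (hab k)).le)

lemma exists_box_mem_boxesOfShape [NeZero m] (hab : ∀ i, a i < b i) :
    ∃ n : Fin m → ℕ, box a b ∈ boxesOfShape (fun i => (2⁻¹ : ℝ) ^ n i) ∧
      ∀ i, ecc a b ≤ 2⁻¹ ^ n i := by
  set L : ℝ := ⨆ i, (b i - a i)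
  have hside (i) : 0 < b i - a i := sub_pos.2 (hab i)
  have hle (i) : b i - a i ≤ L := le_ciSup (Set.finite_range fun k => b k - a k).bddAbove i
  have hL : 0 < L := (hside 0).trans_le (hle 0)
  choose n hlow hupp using fun i =>
    exists_nat_pow_near_of_lt_one (div_pos (hside i) hL) ((div_le_one hL).2 (hle i))
      (y := (2⁻¹ : ℝ)) (by norm_num) (by norm_num)
  refine ⟨n, ⟨a, b, L, hL, box_eq_Icc a b, fun i => ⟨?_, (div_le_iff₀ hL).1 (hupp i)⟩⟩,
    fun i => (ecc_le_div_iSup hab i).trans (hupp i)⟩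
  have := (lt_div_iff₀ hL).1 (hlow i)
  rw [pow_succ] at this
  linarith

lemma eccMaximal_le_iSup_maximalFunction [NeZero m] {α : ℝ} (hα : 0 ≤ α)
    (f : (Fin m → ℝ) → ℝ≥0∞) (x : Fin m → ℝ) :
    eccMaximal α f x ≤ ⨆ n : Fin m → ℕ, ((∏ i, (2⁻¹ ^ (α / m)) ^ n i : ℝ≥0) : ℝ≥0∞) *
      maximalFunction volume (boxesOfShape fun i => (2⁻¹ : ℝ) ^ n i) f x := by
  refine iSup₂_le fun a b => iSup₂_le fun hab hx => ?_
  obtain ⟨n, hshape, hecc⟩ := exists_box_mem_boxesOfShape hab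
  refine le_iSup_of_le n (mul_le_mul' ?_ (le_iSup₂_of_le _ hshape (le_iSup_of_le hx le_rfl)))
  refine ENNReal.ofReal_le_of_le_toReal ?_
  refine (rpow_le_prod_rpow (ecc_nonneg hab) hα hecc).trans_eq ?_
  simp only [ENNReal.coe_toReal, NNReal.coe_prod, NNReal.coe_pow, NNReal.coe_rpow, NNReal.coe_inv,
    NNReal.coe_ofNat, Fintype.card_fin,
    Real.rpow_pow_comm (inv_nonneg.2 (zero_le_two (α := ℝ)))]

lemma tsum_prod_pow_ne_top {θ : ℝ≥0} (hθ : θ < 1) :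
    ∑' n : Fin m → ℕ, ((∏ i, θ ^ n i : ℝ≥0) : ℝ≥0∞) ≠ ∞ := by
  simp only [ENNReal.ofNNReal_finsetProd, ENNReal.coe_pow]
  rw [tsum_prod_eq_prod_tsum fun _ k => (θ : ℝ≥0∞) ^ k]
  simp only [ENNReal.tsum_geometric]
  exact ENNReal.prod_ne_top fun _ _ => ENNReal.inv_ne_top.2
    (tsub_pos_of_lt (ENNReal.coe_lt_one_iff.2 hθ)).ne'

theorem exists_mul_volume_lt_eccMaximal_le [NeZero m] {α : ℝ} (hα : 0 < α) :
    ∃ C : ℝ≥0, ∀ f : (Fin m → ℝ) → ℝ≥0∞, ∫⁻ x, f x ≠ ∞ → ∀ c : ℝ≥0∞,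
      c * volume {x | c < eccMaximal α f x} ≤ C * ∫⁻ x, f x := by
  have hθ : (2⁻¹ : ℝ≥0) ^ (α / m) < 1 :=
    NNReal.rpow_lt_one (by norm_num) (div_pos hα (Nat.cast_pos.2 (NeZero.pos m)))
  have htop := tsum_prod_pow_ne_top (m := m) hθ
  refine ⟨(∑' n : Fin m → ℕ, ((∏ i, (2⁻¹ ^ (α / m)) ^ n i : ℝ≥0) : ℝ≥0∞)).toNNReal * 17 ^ m,
    fun f hf c => ?_⟩
  have hshape (n : Fin m → ℕ) (c : ℝ≥0∞) := by
    simpa only [Fintype.card_fin] using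
      (isEngulfing_boxesOfShape fun i => pow_pos (inv_pos.2 two_pos) (n i)
        : IsEngulfing volume (boxesOfShape fun i => (2⁻¹ : ℝ) ^ n i) _
        ).mul_measure_lt_maximalFunction_le hf c
  calc c * volume {x | c < eccMaximal α f x}
      ≤ c * volume {x | c < ⨆ n : Fin m → ℕ, ((∏ i, (2⁻¹ ^ (α / m)) ^ n i : ℝ≥0) : ℝ≥0∞) *
          maximalFunction volume (boxesOfShape fun i => (2⁻¹ : ℝ) ^ n i) f x} := by
        gcongr with x; exact eccMaximal_le_iSup_maximalFunction hα.le f x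
    _ ≤ _ := mul_measure_lt_iSup_mul_le hshape _ c
    _ = _ := by
      rw [ENNReal.coe_mul, ENNReal.coe_toNNReal htop]
      push_cast
      rw [mul_assoc]

end EccentricityWeight

section PowerAverages

variable {m : ℕ}

lemma eLpNorm_natCast_pow_eq_lintegral {X E : Type*} [MeasurableSpace X] {μ : Measure X}
    [NormedAddCommGroup E] (F : X → E) {p : ℕ} (hp : p ≠ 0) :
    eLpNorm F p μ ^ p = ∫⁻ x, ‖F x‖ₑ ^ p ∂μ := by
  have := eLpNorm_nnreal_pow_eq_lintegral (f := F) (μ := μ) (p := p) (by exact_mod_cast hp)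
  simpa using this

lemma two_zpow_one_sub [NeZero m] : (2 : ℝ) ^ ((1 : ℤ) - m) = ((2 ^ (m - 1) : ℕ) : ℝ)⁻¹ := by
  have := NeZero.one_le (n := m)
  rw [show (1 : ℤ) - m = -((m - 1 : ℕ) : ℤ) by omega, _root_.zpow_neg, zpow_natCast]
  push_cast
  rfl

lemma ofReal_avg_le [NeZero m] (S : Set (Fin m → ℝ)) (F : (Fin m → ℝ) → ℝ) :
    ENNReal.ofReal (avg S F) ≤
      (⨍⁻ x in S, ‖F x‖ₑ ^ (2 ^ (m - 1)) ∂volume) ^ ((2 ^ (m - 1) : ℕ) : ℝ)⁻¹ := by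
  have hint : ENNReal.ofReal (∫ x in S, |F x| ^ (2 ^ (m - 1))) ≤
      ∫⁻ x in S, ‖F x‖ₑ ^ (2 ^ (m - 1)) := by
    refine (Real.ofReal_le_enorm _).trans ((enorm_integral_le_lintegral_enorm _).trans_eq ?_)
    simp only [enorm_pow, Real.enorm_abs]
  have hvol : ENNReal.ofReal (volume S).toReal⁻¹ ≤ (volume S)⁻¹ := by
    rw [← ENNReal.toReal_inv]
    exact ENNReal.ofReal_toReal_le
  rw [avg, two_zpow_one_sub, ← ENNReal.ofReal_rpow_of_nonneg (by positivity) (by positivity),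
    ENNReal.ofReal_mul (by positivity), setLAverage_eq, div_eq_mul_inv, mul_comm (lintegral _ _)]
  gcongr

lemma Mal_singleton_le_eccMaximal_rpow [NeZero m] (α : ℝ) (F : (Fin m → ℝ) → ℝ)
    (x : Fin m → ℝ) :
    Mal α F {x} ≤
      eccMaximal α (fun y => ‖F y‖ₑ ^ (2 ^ (m - 1))) x ^ ((2 ^ (m - 1) : ℕ) : ℝ)⁻¹ := by
  refine iSup₂_le fun a b => iSup₂_le fun hab hx => ?_
  have hecc : 0 ≤ ecc a b ^ α := Real.rpow_nonneg (ecc_nonneg hab) α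
  rw [two_zpow_one_sub, ENNReal.ofReal_mul (by positivity),
    ← ENNReal.ofReal_rpow_of_nonneg hecc (by positivity)]
  refine (mul_le_mul_right (ofReal_avg_le (box a b) F) _).trans ?_
  rw [← ENNReal.mul_rpow_of_nonneg _ _ (by positivity)]
  gcongr
  exact le_iSup₂_of_le a b (le_iSup₂_of_le hab (Set.singleton_subset_iff.1 hx) le_rfl)

lemma setOf_lt_Mal_singleton_subset [NeZero m] (α : ℝ) (F : (Fin m → ℝ) → ℝ) (c : ℝ≥0∞) :
    {x | c < Mal α F {x}} ⊆
      {x | c ^ (2 ^ (m - 1)) < eccMaximal α (fun y => ‖F y‖ₑ ^ (2 ^ (m - 1))) x} := by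
  intro x hx
  have h := ENNReal.rpow_lt_rpow (hx.trans_le (Mal_singleton_le_eccMaximal_rpow α F x))
    (z := ((2 ^ (m - 1) : ℕ) : ℝ)) (by positivity)
  rwa [ENNReal.rpow_natCast, ENNReal.rpow_inv_rpow (by positivity)] at h

end PowerAverages

/-- Lemma (weak type `2^{m−1}` bound for the modified strong maximal operator `M_α`). -/
theorem statement5 (m : ℕ) (hm : 2 ≤ m) (α : ℝ) (hα : 0 < α) :
    ∃ C : ℝ≥0, ∀ F : (Fin m → ℝ) → ℝ, Measurable F →
      MemLp F ((2:ℝ≥0∞)^(m-1)) volume →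
      ∀ lam : ℝ, 0 < lam →
        volume {x : Fin m → ℝ | ENNReal.ofReal lam < Mal α F {x}} ≤
          C * ENNReal.ofReal (lam ^ (-(2:ℤ)^(m-1))) *
            (eLpNorm F ((2:ℝ≥0∞)^(m-1)) volume) ^ (2^(m-1) : ℕ) := by
  have : NeZero m := ⟨by omega⟩
  obtain ⟨C, hC⟩ := exists_mul_volume_lt_eccMaximal_le (m := m) hα
  refine ⟨C, fun F _ hF lam hlam => ?_⟩
  set p : ℕ := 2 ^ (m - 1) with hp
  have hnorm : eLpNorm F (2 ^ (m - 1)) volume ^ p = ∫⁻ x, ‖F x‖ₑ ^ p := by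
    exact_mod_cast eLpNorm_natCast_pow_eq_lintegral F (p := p) (by positivity)
  have hlam_zpow : ENNReal.ofReal (lam ^ (-(2 : ℤ) ^ (m - 1))) = (ENNReal.ofReal lam ^ p)⁻¹ := by
    rw [← ENNReal.ofReal_pow hlam.le, ← ENNReal.ofReal_inv_of_pos (by positivity),
      _root_.zpow_neg, hp]
    norm_cast
  have hweak := hC (fun x => ‖F x‖ₑ ^ p) (hnorm ▸ ENNReal.pow_ne_top hF.eLpNorm_ne_top)
    (ENNReal.ofReal lam ^ p)
  rw [hlam_zpow, hnorm, mul_right_comm, ← div_eq_mul_inv,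
    ENNReal.le_div_iff_mul_le (.inl (by positivity)) (.inl (by finiteness)), mul_comm]
  exact (mul_le_mul_right (measure_mono (setOf_lt_Mal_singleton_subset α F _)) _).trans hweak

end SBL
end
end

section
/- Let m ≥ 1 be an integer. For any measurable functions F_j : ℝ^m → ℝ, j ∈ 𝒞, one has ∫_{ℝ^{2m}} ∏_{j∈𝒞} |F_j(Π_j x)| dx ≤ ∏_{j∈𝒞} ‖F_j‖_{L^{2^{m−1}}(ℝ^m)}; in particular, if the latter product is finite then |∫_{ℝ^{2m}} ∏_{j∈𝒞} F_j(Π_j x) dx| ≤ ∏_{j∈𝒞} ‖F_j‖_{L^{2^{m−1}}(ℝ^m)}. -/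
open MeasureTheory Matrix
open scoped ENNReal NNReal BigOperators

noncomputable section

/-!
The inequality is an instance of Finner's inequality: if the `j`-th function depends only on the
coordinates in `S j` and `∑ (p j)⁻¹ = 1` over the `j` with `i ∈ S j`, for every coordinate `i`, then
the integral of the product is at most the product of the `L^{p j}` norms. One integrates out one
coordinate at a time: the functions not depending on it are constants, and Hölder's inequality with
the exponents of the remaining ones applies. For the cube, each of the `2m` coordinates is selected
by exactly half of the `2^m` corners, so that all exponents can be taken to be `2^(m-1)`.
-/

namespace SBL

section Finner

variable {ι κ : Type*} {X : ι → Type*} [DecidableEq ι] [Fintype κ]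

theorem apply_update_of_dependsOn {β : Type*} {f : (∀ i, X i) → β} {s : Set ι}
    (hf : DependsOn f s) {i : ι} (hi : i ∉ s) (x : ∀ i, X i) (y : X i) :
    f (Function.update x i y) = f x :=
  hf fun _ hk ↦ Function.update_of_ne (ne_of_mem_of_not_mem hk hi) _ _

variable [∀ i, MeasurableSpace (X i)] {μ : ∀ i, Measure (X i)}

theorem dependsOn_lmarginal {f : (∀ i, X i) → ℝ≥0∞} {S : Set ι} (hf : DependsOn f S)
    (s : Finset ι) : DependsOn (∫⋯∫⁻_s, f ∂μ) (S \ s) := by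
  refine fun x y hxy ↦ lintegral_congr fun z ↦ hf fun i hi ↦ ?_
  by_cases his : i ∈ s
  · simp only [Function.updateFinset, his, dite_true]
  · simp only [Function.updateFinset, his, dite_false, hxy i ⟨hi, his⟩]

theorem lintegral_prod_rpow_le_of_forall_eq_const {Y : Type*} [MeasurableSpace Y] {ν : Measure Y}
    {g : κ → Y → ℝ≥0∞} (hg : ∀ j, Measurable (g j)) {p : κ → ℝ} (hp : ∀ j, 0 ≤ p j)
    {P : κ → Prop} [DecidablePred P] (hpP : ∑ j with P j, p j = 1) {c : κ → ℝ≥0∞}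
    (hc : ∀ j, ¬P j → ∀ y, g j y = c j) :
    ∫⁻ y, ∏ j, g j y ^ p j ∂ν ≤ ∏ j, (if P j then ∫⁻ y, g j y ∂ν else c j) ^ p j := by
  calc ∫⁻ y, ∏ j, g j y ^ p j ∂ν
      = ∫⁻ y, (∏ j with P j, g j y ^ p j) * ∏ j with ¬P j, c j ^ p j ∂ν := by
        refine lintegral_congr fun y ↦ ?_
        rw [← Finset.prod_filter_mul_prod_filter_not _ P]
        congr 1
        exact Finset.prod_congr rfl fun j hj ↦ by rw [hc j (Finset.mem_filter.1 hj).2]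
    _ = (∫⁻ y, ∏ j with P j, g j y ^ p j ∂ν) * ∏ j with ¬P j, c j ^ p j :=
        lintegral_mul_const _ <| Finset.measurable_fun_prod _ fun j _ ↦ (hg j).pow_const _
    _ ≤ (∏ j with P j, (∫⁻ y, g j y ∂ν) ^ p j) * ∏ j with ¬P j, c j ^ p j := by
        gcongr
        exact ENNReal.lintegral_prod_norm_pow_le _ (fun j _ ↦ (hg j).aemeasurable) hpP
          fun j _ ↦ hp j
    _ = ∏ j, (if P j then ∫⁻ y, g j y ∂ν else c j) ^ p j := by
        simp only [ite_pow, Finset.prod_ite]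

variable [∀ i, SigmaFinite (μ i)]

theorem lmarginal_prod_rpow_le {S : κ → Finset ι} {f : κ → (∀ i, X i) → ℝ≥0∞}
    (hf : ∀ j, Measurable (f j)) (hfS : ∀ j, DependsOn (f j) (S j)) {p : κ → ℝ}
    (hp : ∀ j, 0 ≤ p j) {s : Finset ι} (hpS : ∀ i ∈ s, ∑ j with i ∈ S j, p j = 1)
    (x : ∀ i, X i) :
    (∫⋯∫⁻_s, (fun y ↦ ∏ j, f j y ^ p j) ∂μ) x ≤ ∏ j, (∫⋯∫⁻_s ∩ S j, f j ∂μ) x ^ p j := by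
  induction s using Finset.induction generalizing x with
  | empty => simp
  | insert i s hi ih =>
    have hmarg (j : κ) : Measurable fun y ↦ (∫⋯∫⁻_s ∩ S j, f j ∂μ) (Function.update x i y) :=
      ((hf j).lmarginal μ).comp (measurable_update x)
    have hconst (j : κ) (hj : i ∉ S j) (y : X i) :
        (∫⋯∫⁻_s ∩ S j, f j ∂μ) (Function.update x i y) = (∫⋯∫⁻_s ∩ S j, f j ∂μ) x :=
      apply_update_of_dependsOn (dependsOn_lmarginal (hfS j) _) (fun h ↦ hj h.1) x y
    rw [lmarginal_insert _ (Finset.measurable_fun_prod _ fun j _ ↦ (hf j).pow_const _) hi]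
    calc ∫⁻ y, (∫⋯∫⁻_s, (fun y ↦ ∏ j, f j y ^ p j) ∂μ) (Function.update x i y) ∂μ i
        ≤ ∫⁻ y, ∏ j, (∫⋯∫⁻_s ∩ S j, f j ∂μ) (Function.update x i y) ^ p j ∂μ i :=
          lintegral_mono fun y ↦ ih (fun k hk ↦ hpS k (Finset.mem_insert_of_mem hk)) _
      _ ≤ ∏ j, (if i ∈ S j then ∫⁻ y, (∫⋯∫⁻_s ∩ S j, f j ∂μ) (Function.update x i y) ∂μ i
            else (∫⋯∫⁻_s ∩ S j, f j ∂μ) x) ^ p j :=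
          lintegral_prod_rpow_le_of_forall_eq_const hmarg hp (hpS i (Finset.mem_insert_self i s))
            hconst
      _ = ∏ j, (∫⋯∫⁻_insert i s ∩ S j, f j ∂μ) x ^ p j := by
          refine Finset.prod_congr rfl fun j _ ↦ ?_
          split_ifs with hj
          · rw [Finset.insert_inter_of_mem hj, lmarginal_insert _ (hf j) (by simp [hi])]
          · rw [Finset.insert_inter_of_notMem hj]

variable [Fintype ι] {η : κ → Type*} [∀ j, Fintype (η j)] {σ : ∀ j, η j → ι}

theorem lintegral_prod_rpow_comp_le (hσ : ∀ j, Function.Injective (σ j))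
    {f : ∀ j, (∀ a, X (σ j a)) → ℝ≥0∞} (hf : ∀ j, Measurable (f j)) {p : κ → ℝ}
    (hp : ∀ j, 0 ≤ p j) (hpσ : ∀ i, ∑ j with i ∈ Finset.univ.image (σ j), p j = 1) :
    ∫⁻ x, ∏ j, f j (fun a ↦ x (σ j a)) ^ p j ∂Measure.pi μ ≤
      ∏ j, (∫⁻ y, f j y ∂Measure.pi fun a ↦ μ (σ j a)) ^ p j := by
  classical
  rcases isEmpty_or_nonempty (∀ i, X i) with _ | ⟨⟨x⟩⟩
  · simp only [lintegral_of_isEmpty, zero_le]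
  have hmarg (j : κ) : (∫⋯∫⁻_Finset.univ.image (σ j), (fun x ↦ f j fun a ↦ x (σ j a)) ∂μ) x =
      ∫⁻ y, f j y ∂Measure.pi fun a ↦ μ (σ j a) :=
    (lmarginal_image (hσ j) _ (hf j) x).trans (lintegral_eq_lmarginal_univ _).symm
  simp only [lintegral_eq_lmarginal_univ (μ := μ) x, ← hmarg]
  simpa only [Finset.univ_inter] using lmarginal_prod_rpow_le (μ := μ) (s := Finset.univ)
    (S := fun j ↦ Finset.univ.image (σ j)) (f := fun j x ↦ f j fun a ↦ x (σ j a))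
    (fun j ↦ (hf j).comp (by fun_prop))
    (fun j y z hyz ↦ congrArg (f j) (funext fun a ↦ hyz _ (by simp))) hp
    (fun i _ ↦ hpσ i) x

theorem lintegral_prod_enorm_comp_le {E : κ → Type*} [∀ j, TopologicalSpace (E j)]
    [∀ j, ContinuousENorm (E j)] (hσ : ∀ j, Function.Injective (σ j))
    {F : ∀ j, (∀ a, X (σ j a)) → E j} (hF : ∀ j, StronglyMeasurable (F j))
    {p : κ → ℝ≥0} (hp : ∀ j, p j ≠ 0)
    (hpσ : ∀ i, ∑ j with i ∈ Finset.univ.image (σ j), (p j)⁻¹ = 1) :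
    ∫⁻ x, ∏ j, ‖F j fun a ↦ x (σ j a)‖ₑ ∂Measure.pi μ ≤
      ∏ j, eLpNorm (F j) (p j) (Measure.pi fun a ↦ μ (σ j a)) := by
  have h := lintegral_prod_rpow_comp_le (μ := μ) hσ (f := fun j y ↦ ‖F j y‖ₑ ^ (p j : ℝ))
    (fun j ↦ (hF j).enorm.pow_const _) (p := fun j ↦ (p j : ℝ)⁻¹) (fun j ↦ by positivity)
    (fun i ↦ mod_cast hpσ i)
  simpa only [← ENNReal.rpow_mul, mul_inv_cancel₀ (NNReal.coe_ne_zero.2 (hp _)),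
    ENNReal.rpow_one, eLpNorm_nnreal_eq_lintegral (hp _), one_div] using h

theorem statement6_general {R : Type*} [NormedCommRing R] [NormOneClass R] [NormedSpace ℝ R]
    (hσ : ∀ j, Function.Injective (σ j)) {F : ∀ j, (∀ a, X (σ j a)) → R}
    (hF : ∀ j, StronglyMeasurable (F j)) {p : κ → ℝ≥0} (hp : ∀ j, p j ≠ 0)
    (hpσ : ∀ i, ∑ j with i ∈ Finset.univ.image (σ j), (p j)⁻¹ = 1) :
    ∫⁻ x, ∏ j, ‖F j fun a ↦ x (σ j a)‖ₑ ∂Measure.pi μ ≤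
        ∏ j, eLpNorm (F j) (p j) (Measure.pi fun a ↦ μ (σ j a)) ∧
      ‖∫ x, ∏ j, F j fun a ↦ x (σ j a) ∂Measure.pi μ‖ₑ ≤
        ∏ j, eLpNorm (F j) (p j) (Measure.pi fun a ↦ μ (σ j a)) := by
  have hmain := lintegral_prod_enorm_comp_le (μ := μ) hσ hF hp hpσ
  refine ⟨hmain, (enorm_integral_le_lintegral_enorm _).trans <|
    (lintegral_mono fun x ↦ ?_).trans hmain⟩
  simp only [enorm_eq_nnnorm, ← ENNReal.ofNNReal_finsetProd]
  exact ENNReal.coe_le_coe.2 (Finset.nnnorm_prod_le _ _)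

end Finner

theorem sel_injective {m : ℕ} (j : Corner m) : Function.Injective (sel j) := by
  intro a b h
  unfold sel at h
  split_ifs at h <;> simpa using h

theorem inl_mem_image_sel_iff {m : ℕ} {j : Corner m} {i : Fin m} :
    Sum.inl i ∈ Finset.univ.image (sel j) ↔ j i = 0 := by
  simp only [Finset.mem_image, Finset.mem_univ, true_and, sel]
  grind

theorem inr_mem_image_sel_iff {m : ℕ} {j : Corner m} {i : Fin m} :
    Sum.inr i ∈ Finset.univ.image (sel j) ↔ j i = 1 := by
  simp only [Finset.mem_image, Finset.mem_univ, true_and, sel]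
  grind

theorem card_filter_mem_image_sel {m : ℕ} (k : Idx m) :
    (Finset.univ.filter fun j : Corner m ↦ k ∈ Finset.univ.image (sel j)).card = 2 ^ (m - 1) := by
  have hcard (i : Fin m) (b : Fin 2) :
      (Finset.univ.filter fun j : Corner m ↦ j i = b).card = 2 ^ (m - 1) := by
    simpa using Fintype.card_filter_piFinset_const_eq_of_mem Finset.univ i (Finset.mem_univ b)
  rcases k with i | i
  · simpa only [inl_mem_image_sel_iff] using hcard i 0
  · simpa only [inr_mem_image_sel_iff] using hcard i 1

theorem sum_inv_filter_mem_image_sel {m : ℕ} (k : Idx m) :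
    ∑ j : Corner m with k ∈ Finset.univ.image (sel j), ((2 : ℝ≥0) ^ (m - 1))⁻¹ = 1 := by
  rw [Finset.sum_const, card_filter_mem_image_sel]
  simp

/-- Lemma (Brascamp–Lieb inequality for the projections `Π_j`). -/
theorem statement6 (m : ℕ) (hm : 1 ≤ m) (F : Corner m → (Fin m → ℝ) → ℝ)
    (hF : ∀ j, Measurable (F j)) :
    (∫⁻ x : Idx m → ℝ, ∏ j : Corner m, ENNReal.ofReal |F j (proj j x)|) ≤
        (∏ j : Corner m, eLpNorm (F j) ((2:ℝ≥0∞)^(m-1)) volume) ∧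
    ((∏ j : Corner m, eLpNorm (F j) ((2:ℝ≥0∞)^(m-1)) volume) < ⊤ →
      ENNReal.ofReal |∫ x : Idx m → ℝ, ∏ j : Corner m, F j (proj j x)| ≤
        ∏ j : Corner m, eLpNorm (F j) ((2:ℝ≥0∞)^(m-1)) volume) := by
  simpa only [← Real.enorm_eq_ofReal_abs, ENNReal.coe_pow, ENNReal.coe_ofNat] using!
    (statement6_general (X := fun _ ↦ ℝ) (μ := fun _ ↦ volume) sel_injective (F := F)
      (fun j ↦ (hF j).stronglyMeasurable) (p := fun _ ↦ 2 ^ (m - 1)) (fun _ ↦ by positivity)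
      sum_inv_filter_mem_image_sel).imp_right fun h _ ↦ h

end SBL
end
end

section
/- Let m ≥ 2 be an integer, let J be an injective real 2m×m matrix, let u ∈ ℝ^{2m} and 1 ≤ i ≤ m, and let (F_j)_{j∈𝒞} be a tuple of real-valued smooth compactly supported functions on ℝ^m. Then ∫_0^∞ ∫_{ℝ^m} | ∫_{ℝ^{2m}} (∏_{j∈𝒞} F_j(Π_j x)) (∂^0_i ∂^1_i g)_t(x − Jp + ut) dx | dp dt/t < ∞; that is, the integral over the upper half space (p,t) ∈ ℝ^m × (0,∞) is absolutely convergent. -/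
open MeasureTheory Matrix
open scoped ENNReal NNReal BigOperators

noncomputable section

namespace SBL

/-! Fix a mean zero kernel `φ` with polynomial decay on an `n`-dimensional space `E`, and translate
it along a `k`-dimensional subspace with `k < n`. At small scales the mean zero condition replaces
`Φ (a + t y)` by the increment `Φ (a + t y) - Φ a`, so a Lipschitz `Φ` of compact support has total
average `O(t)`. At large scales the integral of the kernel over a slice `p ↦ T p + a` costs only
`t ^ k` against the normalization `t ^ (-n)`, so the total average is `O(t ^ (k - n))`. Both bounds
are uniform in the translation `a`, which may therefore depend on `t`, and both are integrable
against `dt / t` in their range. -/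

open Module Metric

section PolyDecay

variable {E P : Type*} [NormedAddCommGroup E] [NormedAddCommGroup P]

/-- The polynomially decaying weight `(1 + ‖x‖) ^ (-r)`, against which kernels and test functions
are measured. It takes values in `ℝ≥0∞` because it only occurs under lower Lebesgue integrals. -/
def polyDecay (r : ℝ) (x : E) : ℝ≥0∞ := ENNReal.ofReal ((1 + ‖x‖) ^ (-r))

@[fun_prop]
lemma measurable_polyDecay [MeasurableSpace E] [OpensMeasurableSpace E] (r : ℝ) :
    Measurable (polyDecay r : E → ℝ≥0∞) := by
  unfold polyDecay
  fun_prop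

lemma polyDecay_le_of_one_add_norm_le {r A : ℝ} (hr : 0 ≤ r) (hA : 0 < A) {x : E} {q : P}
    (h : 1 + ‖q‖ ≤ A * (1 + ‖x‖)) : polyDecay r x ≤ ENNReal.ofReal (A ^ r) * polyDecay r q := by
  rw [polyDecay, polyDecay, ← ENNReal.ofReal_mul (by positivity)]
  refine ENNReal.ofReal_le_ofReal ?_
  have hpow : (1 + ‖q‖) ^ r ≤ A ^ r * (1 + ‖x‖) ^ r := by
    rw [← Real.mul_rpow hA.le (by positivity)]
    gcongr
  rw [Real.rpow_neg (by positivity), Real.rpow_neg (by positivity), ← div_eq_mul_inv,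
    inv_le_comm₀ (by positivity) (by positivity), inv_div, div_le_iff₀ (by positivity)]
  rwa [mul_comm]

lemma enorm_mul_polyDecay_le (r : ℝ) (x : E) : ‖x‖ₑ * polyDecay r x ≤ polyDecay (r - 1) x := by
  rw [polyDecay, polyDecay, ← ofReal_norm, ← ENNReal.ofReal_mul (norm_nonneg x), neg_sub,
    sub_eq_add_neg, Real.rpow_add (by positivity), Real.rpow_one]
  gcongr
  linarith

lemma exists_one_le_mul_polyDecay_of_norm_le (r R : ℝ) :
    ∃ c : ℝ≥0, ∀ x : E, ‖x‖ ≤ R → 1 ≤ c * polyDecay r x := by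
  refine ⟨((1 + R) ^ |r|).toNNReal, fun x hx => ?_⟩
  have hpow : (1 + ‖x‖) ^ r ≤ (1 + R) ^ |r| := by
    calc (1 + ‖x‖) ^ r ≤ (1 + ‖x‖) ^ |r| :=
          Real.rpow_le_rpow_of_exponent_le (by linarith [norm_nonneg x]) (le_abs_self r)
      _ ≤ (1 + R) ^ |r| := by gcongr
  rw [polyDecay, ENNReal.ofNNReal_toNNReal, ← ENNReal.ofReal_mul
    ((by positivity : 0 ≤ (1 + ‖x‖) ^ r).trans hpow), ENNReal.one_le_ofReal,
    Real.rpow_neg (by positivity), ← div_eq_mul_inv,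
    one_le_div (by positivity)]
  exact hpow

lemma exists_enorm_sub_le_polyDecay {Φ : E → ℝ} {K : ℝ≥0} (hΦ : LipschitzWith K Φ)
    (hΦc : HasCompactSupport Φ) (r : ℝ) :
    ∃ M : ℝ≥0, ∀ x y, ‖Φ x - Φ y‖ₑ ≤ M * ‖x - y‖ₑ * (polyDecay r x + polyDecay r y) := by
  obtain ⟨R, hR⟩ := hΦc.isCompact.isBounded.subset_closedBall 0
  have hzero : ∀ x, ¬‖x‖ ≤ R → Φ x = 0 := fun x hx =>
    image_eq_zero_of_notMem_tsupport fun hmem => hx (mem_closedBall_zero_iff.1 (hR hmem))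
  obtain ⟨c, hc⟩ := exists_one_le_mul_polyDecay_of_norm_le (E := E) r R
  refine ⟨K * c, fun x y => ?_⟩
  by_cases hxy : ‖x‖ ≤ R ∨ ‖y‖ ≤ R
  · have hw : 1 ≤ c * (polyDecay r x + polyDecay r y) := by
      rw [mul_add]
      exact hxy.elim (fun hx => (hc x hx).trans le_self_add) fun hy => (hc y hy).trans le_add_self
    calc ‖Φ x - Φ y‖ₑ ≤ K * ‖x - y‖ₑ := by
          simpa only [edist_eq_enorm_sub] using hΦ.edist_le_mul x y
      _ ≤ K * ‖x - y‖ₑ * (c * (polyDecay r x + polyDecay r y)) := le_mul_of_one_le_right' hw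
      _ = (K * c : ℝ≥0) * ‖x - y‖ₑ * (polyDecay r x + polyDecay r y) := by
          push_cast
          ring
  · push Not at hxy
    simp [hzero x hxy.1.not_ge, hzero y hxy.2.not_ge]

section FiniteDimensional

variable [NormedSpace ℝ E] [FiniteDimensional ℝ E] [MeasurableSpace E] [BorelSpace E]
  {μ : Measure E} [μ.IsAddHaarMeasure] {φ : E → ℝ} {r : ℝ} {C : ℝ≥0}

lemma lintegral_polyDecay_lt_top (hr : (finrank ℝ E : ℝ) < r) : ∫⁻ x, polyDecay r x ∂μ < ⊤ :=
  finite_integral_one_add_norm hr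

lemma integrable_of_enorm_le_polyDecay (hφm : AEStronglyMeasurable φ μ)
    (hφ : ∀ y, ‖φ y‖ₑ ≤ C * polyDecay r y) (hr : (finrank ℝ E : ℝ) < r) : Integrable φ μ := by
  refine ⟨hφm, (lintegral_mono hφ).trans_lt ?_⟩
  rw [lintegral_const_mul _ (measurable_polyDecay r)]
  exact ENNReal.mul_lt_top ENNReal.coe_lt_top (lintegral_polyDecay_lt_top hr)

lemma lintegral_enorm_mul_enorm_lt_top (hφ : ∀ y, ‖φ y‖ₑ ≤ C * polyDecay r y)
    (hr : (finrank ℝ E : ℝ) + 1 < r) : ∫⁻ y, ‖y‖ₑ * ‖φ y‖ₑ ∂μ < ⊤ := by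
  have hle : ∀ y, ‖y‖ₑ * ‖φ y‖ₑ ≤ C * polyDecay (r - 1) y := fun y =>
    calc ‖y‖ₑ * ‖φ y‖ₑ ≤ ‖y‖ₑ * (C * polyDecay r y) := by gcongr; exact hφ y
      _ = C * (‖y‖ₑ * polyDecay r y) := mul_left_comm ..
      _ ≤ C * polyDecay (r - 1) y := by gcongr; exact enorm_mul_polyDecay_le r y
  refine (lintegral_mono hle).trans_lt ?_
  rw [lintegral_const_mul _ (measurable_polyDecay _)]
  exact ENNReal.mul_lt_top ENNReal.coe_lt_top (lintegral_polyDecay_lt_top (by linarith))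

end FiniteDimensional

section Slices

variable [NormedSpace ℝ E] [NormedSpace ℝ P] [FiniteDimensional ℝ P] [MeasurableSpace P]
  [BorelSpace P] {ν : Measure P} [ν.IsAddHaarMeasure] {T : P →L[ℝ] E} {S : E →L[ℝ] P} {r : ℝ}

lemma exists_lintegral_polyDecay_comp_add_le (hST : Function.LeftInverse S T)
    (hr : (finrank ℝ P : ℝ) < r) : ∃ D : ℝ≥0, ∀ a, ∫⁻ p, polyDecay r (T p + a) ∂ν ≤ D := by
  have hr0 : 0 ≤ r := (Nat.cast_nonneg _).trans hr.le
  lift ∫⁻ q : P, polyDecay r q ∂ν to ℝ≥0 using (lintegral_polyDecay_lt_top hr).ne with I hI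
  refine ⟨((1 + ‖S‖) ^ r).toNNReal * I, fun a => ?_⟩
  have hnorm : ∀ p, 1 + ‖p + S a‖ ≤ (1 + ‖S‖) * (1 + ‖T p + a‖) := fun p => by
    have h : ‖p + S a‖ ≤ ‖S‖ * ‖T p + a‖ := by simpa [hST p] using S.le_opNorm (T p + a)
    nlinarith [norm_nonneg S, norm_nonneg (T p + a)]
  calc ∫⁻ p, polyDecay r (T p + a) ∂ν
      ≤ ∫⁻ p, ENNReal.ofReal ((1 + ‖S‖) ^ r) * polyDecay r (p + S a) ∂ν :=
        lintegral_mono fun p => polyDecay_le_of_one_add_norm_le hr0 (by positivity) (hnorm p)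
    _ = ENNReal.ofReal ((1 + ‖S‖) ^ r) * ∫⁻ p, polyDecay r (p + S a) ∂ν :=
        lintegral_const_mul _ (by fun_prop)
    _ = (((1 + ‖S‖) ^ r).toNNReal * I : ℝ≥0) := by
        rw [lintegral_add_right_eq_self, ← hI, ENNReal.coe_mul, ENNReal.ofReal]

lemma lintegral_comp_inv_smul (f : P → ℝ≥0∞) {t : ℝ} (ht : 0 < t) :
    ∫⁻ p, f (t⁻¹ • p) ∂ν = ENNReal.ofReal (t ^ finrank ℝ P) * ∫⁻ p, f p ∂ν := by
  rw [← (measurableEmbedding_const_smul₀ (inv_ne_zero ht.ne')).lintegral_map,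
    Measure.map_addHaar_smul ν (inv_ne_zero ht.ne'), lintegral_smul_measure, inv_pow, inv_inv,
    abs_of_pos (by positivity), smul_eq_mul]

lemma exists_lintegral_polyDecay_smul_comp_add_le (hST : Function.LeftInverse S T)
    (hr : (finrank ℝ P : ℝ) < r) :
    ∃ D : ℝ≥0, ∀ t : ℝ, 0 < t → ∀ a,
      ∫⁻ p, polyDecay r (t⁻¹ • (T p + a)) ∂ν ≤ ENNReal.ofReal (t ^ finrank ℝ P) * D := by
  obtain ⟨D, hD⟩ := exists_lintegral_polyDecay_comp_add_le (ν := ν) hST hr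
  refine ⟨D, fun t ht a => ?_⟩
  simp only [smul_add, ← map_smul]
  rw [lintegral_comp_inv_smul (fun p => polyDecay r (T p + t⁻¹ • a)) ht]
  gcongr
  exact hD _

end Slices

end PolyDecay

section ScaleAverage

lemma lintegral_enorm_integral_le {α β F : Type*} [MeasurableSpace α] [MeasurableSpace β]
    [NormedAddCommGroup F] [NormedSpace ℝ F] {μ : Measure α} {ν : Measure β} [SFinite μ]
    [SFinite ν] {G : β → α → F} {W : β → α → ℝ≥0∞} {g : α → ℝ≥0∞} {B : ℝ≥0∞}
    (hW : Measurable (Function.uncurry W)) (hg : AEMeasurable g μ)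
    (hG : ∀ p x, ‖G p x‖ₑ ≤ W p x * g x) (hB : ∀ x, ∫⁻ p, W p x ∂ν ≤ B) :
    ∫⁻ p, ‖∫ x, G p x ∂μ‖ₑ ∂ν ≤ B * ∫⁻ x, g x ∂μ :=
  calc ∫⁻ p, ‖∫ x, G p x ∂μ‖ₑ ∂ν
      ≤ ∫⁻ p, ∫⁻ x, W p x * g x ∂μ ∂ν := lintegral_mono fun p =>
        (enorm_integral_le_lintegral_enorm _).trans (lintegral_mono (hG p))
    _ = ∫⁻ x, ∫⁻ p, W p x * g x ∂ν ∂μ :=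
        lintegral_lintegral_swap (hW.aemeasurable.mul hg.comp_snd)
    _ = ∫⁻ x, (∫⁻ p, W p x ∂ν) * g x ∂μ := lintegral_congr fun _ =>
        lintegral_mul_const _ (hW.comp measurable_prodMk_right)
    _ ≤ ∫⁻ x, B * g x ∂μ := lintegral_mono fun x => mul_le_mul_left (hB x) _
    _ = B * ∫⁻ x, g x ∂μ := lintegral_const_mul'' _ hg

variable {E P : Type*} [NormedAddCommGroup E] [NormedSpace ℝ E] [MeasurableSpace E]
  [NormedAddCommGroup P] [NormedSpace ℝ P] [FiniteDimensional ℝ P] [MeasurableSpace P]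
  [BorelSpace P]

/-- The average `∫ Φ(x) φ_t(x - a) dx` of `Φ` against the `L¹`-normalized dilate
`φ_t(x) = t ^ (-n) φ(t⁻¹ x)` of the kernel `φ`, centred at `a`, where `n = dim E`. -/
def scaleAverage (μ : Measure E) (Φ φ : E → ℝ) (t : ℝ) (a : E) : ℝ :=
  (t ^ finrank ℝ E)⁻¹ * ∫ x, Φ x * φ (t⁻¹ • (x - a)) ∂μ

variable [FiniteDimensional ℝ E] [BorelSpace E] {μ : Measure E} [μ.IsAddHaarMeasure]
  {ν : Measure P} [ν.IsAddHaarMeasure] {T : P →L[ℝ] E} {S : E →L[ℝ] P} {Φ φ : E → ℝ}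
  {K C : ℝ≥0} {r : ℝ}

lemma scaleAverage_eq_integral_comp_add_smul (Φ φ : E → ℝ) {t : ℝ} (ht : 0 < t) (a : E) :
    scaleAverage μ Φ φ t a = ∫ y, Φ (a + t • y) * φ y ∂μ := by
  have h := Measure.integral_comp_smul_of_nonneg μ (fun x => Φ (a + x) * φ (t⁻¹ • x)) t
    (hR := ht.le)
  simp only [inv_smul_smul₀ ht.ne', smul_eq_mul] at h
  rw [h, scaleAverage, ← integral_add_left_eq_self _ a]
  simp only [add_sub_cancel_left]

lemma scaleAverage_eq_integral_sub_mul (hΦ : Continuous Φ) (hΦc : HasCompactSupport Φ)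
    (hφ : Integrable φ μ) (hφ0 : ∫ y, φ y ∂μ = 0) {t : ℝ} (ht : 0 < t) (a : E) :
    scaleAverage μ Φ φ t a = ∫ y, (Φ (a + t • y) - Φ a) * φ y ∂μ := by
  obtain ⟨M, hM⟩ := hΦc.exists_bound_of_continuous hΦ
  have hint : Integrable (fun y => Φ (a + t • y) * φ y) μ :=
    hφ.bdd_mul (hΦ.comp (by fun_prop)).aestronglyMeasurable (.of_forall fun y => hM _)
  simp only [sub_mul]
  rw [integral_sub hint (hφ.const_mul _), integral_const_mul, hφ0, mul_zero, sub_zero,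
    scaleAverage_eq_integral_comp_add_smul Φ φ ht]

lemma exists_lintegral_enorm_scaleAverage_le_mul (hST : Function.LeftInverse S T)
    (hΦ : LipschitzWith K Φ) (hΦc : HasCompactSupport Φ) (hφ : Integrable φ μ)
    (hφ1 : ∫⁻ y, ‖y‖ₑ * ‖φ y‖ₑ ∂μ < ⊤) (hφ0 : ∫ y, φ y ∂μ = 0) :
    ∃ D : ℝ≥0, ∀ t : ℝ, 0 < t → ∀ a,
      ∫⁻ p, ‖scaleAverage μ Φ φ t (T p + a)‖ₑ ∂ν ≤ D * ENNReal.ofReal t := by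
  set w : E → ℝ≥0∞ := polyDecay (finrank ℝ P + 1)
  have hw : Measurable w := measurable_polyDecay _
  obtain ⟨M, hM⟩ := exists_enorm_sub_le_polyDecay hΦ hΦc (finrank ℝ P + 1)
  obtain ⟨B, hB⟩ := exists_lintegral_polyDecay_comp_add_le (ν := ν) hST (lt_add_one _)
  lift ∫⁻ y, ‖y‖ₑ * ‖φ y‖ₑ ∂μ to ℝ≥0 using hφ1.ne with I hI
  refine ⟨M * (B + B) * I, fun t ht a => ?_⟩
  have hpoint : ∀ p y, ‖(Φ (T p + a + t • y) - Φ (T p + a)) * φ y‖ₑ ≤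
      M * ENNReal.ofReal t * (w (T p + a + t • y) + w (T p + a)) * (‖y‖ₑ * ‖φ y‖ₑ) := by
    intro p y
    have hincr := hM (T p + a + t • y) (T p + a)
    rw [add_sub_cancel_left, enorm_smul, Real.enorm_of_nonneg ht.le] at hincr
    rw [enorm_mul]
    exact (mul_le_mul_left hincr _).trans_eq (by ring)
  have hslices : ∀ y, ∫⁻ p, M * ENNReal.ofReal t * (w (T p + a + t • y) + w (T p + a)) ∂ν ≤
      M * ENNReal.ofReal t * (B + B) := by
    intro y
    rw [lintegral_const_mul _ (by fun_prop), lintegral_add_right _ (by fun_prop)]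
    gcongr
    · simpa only [add_assoc] using hB (a + t • y)
    · exact hB a
  simp only [scaleAverage_eq_integral_sub_mul hΦ.continuous hΦc hφ hφ0 ht]
  refine (lintegral_enorm_integral_le (by fun_prop)
    (measurable_enorm.aemeasurable.mul hφ.aestronglyMeasurable.enorm) hpoint hslices).trans_eq ?_
  simp only [Pi.mul_apply, ← hI]
  push_cast
  ring

lemma exists_lintegral_enorm_scaleAverage_le_rpow (hST : Function.LeftInverse S T)
    (hΦ : Integrable Φ μ) (hφ : ∀ y, ‖φ y‖ₑ ≤ C * polyDecay r y) (hr : (finrank ℝ P : ℝ) < r) :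
    ∃ D : ℝ≥0, ∀ t : ℝ, 0 < t → ∀ a, ∫⁻ p, ‖scaleAverage μ Φ φ t (T p + a)‖ₑ ∂ν ≤
      D * ENNReal.ofReal (t ^ ((finrank ℝ P : ℝ) - finrank ℝ E)) := by
  obtain ⟨B, hB⟩ := exists_lintegral_polyDecay_smul_comp_add_le (ν := ν) hST hr
  lift ∫⁻ x, ‖Φ x‖ₑ ∂μ to ℝ≥0 using hΦ.2.ne with I hI
  refine ⟨C * B * I, fun t ht a => ?_⟩
  set c := ENNReal.ofReal (t ^ finrank ℝ E)⁻¹ * C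
  have hmeas : Measurable fun z : P × E => c * polyDecay r (t⁻¹ • (z.2 - (T z.1 + a))) := by
    unfold polyDecay
    fun_prop
  have hpoint : ∀ p x, ‖(t ^ finrank ℝ E)⁻¹ * (Φ x * φ (t⁻¹ • (x - (T p + a))))‖ₑ ≤
      c * polyDecay r (t⁻¹ • (x - (T p + a))) * ‖Φ x‖ₑ := by
    intro p x
    rw [enorm_mul, enorm_mul, Real.enorm_of_nonneg (by positivity), mul_comm ‖Φ x‖ₑ, ← mul_assoc,
      mul_assoc _ (C : ℝ≥0∞)]
    gcongr
    exact hφ _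
  have hslices : ∀ x, ∫⁻ p, c * polyDecay r (t⁻¹ • (x - (T p + a))) ∂ν ≤
      c * (ENNReal.ofReal (t ^ finrank ℝ P) * B) := by
    intro x
    rw [lintegral_const_mul' _ _ (by finiteness)]
    gcongr
    refine le_of_eq_of_le (lintegral_congr fun p => ?_) (hB t ht (a - x))
    rw [polyDecay, polyDecay, ← norm_neg, ← smul_neg, neg_sub, add_sub_assoc]
  have hpow : (t ^ finrank ℝ E)⁻¹ * t ^ finrank ℝ P = t ^ ((finrank ℝ P : ℝ) - finrank ℝ E) := by
    rw [Real.rpow_sub ht, Real.rpow_natCast, Real.rpow_natCast, div_eq_inv_mul]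
  simp only [scaleAverage, ← integral_const_mul]
  refine (lintegral_enorm_integral_le hmeas hΦ.aestronglyMeasurable.enorm hpoint
    hslices).trans_eq ?_
  rw [← hI, ← hpow, ENNReal.ofReal_mul (by positivity)]
  push_cast
  ring

lemma lintegral_Ioi_inv_mul_lt_top {f : ℝ → ℝ≥0∞} {A B : ℝ≥0} {α β : ℝ} (hα : 0 < α)
    (hβ : β < 0) (hA : ∀ t, 0 < t → f t ≤ A * ENNReal.ofReal (t ^ α))
    (hB : ∀ t, 0 < t → f t ≤ B * ENNReal.ofReal (t ^ β)) :
    ∫⁻ t in Set.Ioi 0, ENNReal.ofReal t⁻¹ * f t < ⊤ := by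
  have hbound : ∀ (D : ℝ≥0) (γ t : ℝ), 0 < t → f t ≤ D * ENNReal.ofReal (t ^ γ) →
      ENNReal.ofReal t⁻¹ * f t ≤ D * ENNReal.ofReal (t ^ (γ - 1)) := by
    intro D γ t ht hf
    rw [Real.rpow_sub_one ht.ne', div_eq_inv_mul, ENNReal.ofReal_mul (by positivity),
      mul_left_comm]
    gcongr
  have hzero : IntegrableOn (fun t : ℝ => t ^ (α - 1)) (Set.Ioc 0 1) :=
    (intervalIntegrable_iff_integrableOn_Ioc_of_le zero_le_one).1
      (intervalIntegral.intervalIntegrable_rpow' (by linarith))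
  have htop : IntegrableOn (fun t : ℝ => t ^ (β - 1)) (Set.Ioi 1) :=
    integrableOn_Ioi_rpow_of_lt (by linarith) one_pos
  rw [← Set.Ioc_union_Ioi_eq_Ioi (zero_le_one' ℝ)]
  refine (lintegral_union_le _ _ _).trans_lt (ENNReal.add_lt_top.2 ⟨?_, ?_⟩)
  · refine (setLIntegral_mono' measurableSet_Ioc fun t ht =>
      hbound A α t ht.1 (hA t ht.1)).trans_lt ?_
    rw [lintegral_const_mul' _ _ ENNReal.coe_ne_top]
    exact ENNReal.mul_lt_top ENNReal.coe_lt_top hzero.lintegral_lt_top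
  · refine (setLIntegral_mono' measurableSet_Ioi fun t (ht : 1 < t) =>
      hbound B β t (by linarith) (hB t (by linarith))).trans_lt ?_
    rw [lintegral_const_mul' _ _ ENNReal.coe_ne_top]
    exact ENNReal.mul_lt_top ENNReal.coe_lt_top htop.lintegral_lt_top

theorem lintegral_enorm_scaleAverage_lt_top {T : P →ₗ[ℝ] E} (hT : Function.Injective T)
    (hPE : finrank ℝ P < finrank ℝ E) (hΦ : LipschitzWith K Φ) (hΦc : HasCompactSupport Φ)
    (hφm : AEStronglyMeasurable φ μ) (hφ : ∀ y, ‖φ y‖ₑ ≤ C * polyDecay r y)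
    (hr : (finrank ℝ E : ℝ) + 1 < r) (hφ0 : ∫ y, φ y ∂μ = 0) (a : ℝ → E) :
    ∫⁻ t in Set.Ioi 0, ENNReal.ofReal t⁻¹ *
      ∫⁻ p, ‖scaleAverage μ Φ φ t (T p + a t)‖ₑ ∂ν < ⊤ := by
  obtain ⟨S, hS⟩ := T.exists_leftInverse_of_injective (LinearMap.ker_eq_bot.2 hT)
  have hST : Function.LeftInverse S.toContinuousLinearMap T.toContinuousLinearMap :=
    LinearMap.congr_fun hS
  have hdim : (finrank ℝ P : ℝ) < finrank ℝ E := mod_cast hPE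
  obtain ⟨A, hA⟩ := exists_lintegral_enorm_scaleAverage_le_mul (ν := ν) hST hΦ hΦc
    (integrable_of_enorm_le_polyDecay hφm hφ (by linarith))
    (lintegral_enorm_mul_enorm_lt_top hφ hr) hφ0
  obtain ⟨B, hB⟩ := exists_lintegral_enorm_scaleAverage_le_rpow (μ := μ) (ν := ν) hST
    (hΦ.continuous.integrable_of_hasCompactSupport hΦc) hφ (by linarith)
  exact lintegral_Ioi_inv_mul_lt_top one_pos (sub_neg.2 hdim)
    (fun t ht => (hA t ht (a t)).trans_eq (by rw [Real.rpow_one])) fun t ht => hB t ht (a t)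

end ScaleAverage

section MixedGaussianDerivative

variable {m : ℕ}

lemma hasFDerivAt_gss (x : Idx m → ℝ) :
    HasFDerivAt gss (gss x •
      (-Real.pi • ∑ k, (2 * x k) • (ContinuousLinearMap.proj k : (Idx m → ℝ) →L[ℝ] ℝ))) x := by
  unfold gss
  refine HasFDerivAt.exp (HasFDerivAt.const_mul (HasFDerivAt.fun_sum fun k _ => ?_) _)
  simpa using ((ContinuousLinearMap.proj k : (Idx m → ℝ) →L[ℝ] ℝ).hasFDerivAt (x := x)).pow 2

lemma fderiv_gss_single (x : Idx m → ℝ) (k : Idx m) :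
    fderiv ℝ gss x (Pi.single k 1) = -(2 * Real.pi) * (x k * gss x) := by
  rw [(hasFDerivAt_gss x).fderiv]
  simp only [_root_.smul_apply, _root_.sum_apply, ContinuousLinearMap.proj_apply, Pi.single_apply,
    smul_eq_mul, mul_ite, mul_one, mul_zero, Finset.sum_ite_eq', Finset.mem_univ, if_true]
  ring

lemma ddg_eq (i : Fin m) (x : Idx m → ℝ) :
    ddg i x = 4 * Real.pi ^ 2 * (x (Sum.inl i) * x (Sum.inr i) * gss x) := by
  have h : HasFDerivAt (fun y : Idx m → ℝ => -(2 * Real.pi) * (y (Sum.inl i) * gss y)) _ x :=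
    (((ContinuousLinearMap.proj (Sum.inl i) : (Idx m → ℝ) →L[ℝ] ℝ).hasFDerivAt (x := x)).mul
      (hasFDerivAt_gss x).differentiableAt.hasFDerivAt).const_mul _
  simp only [ddg, fderiv_gss_single]
  rw [h.fderiv]
  simp only [_root_.smul_apply, _root_.add_apply, fderiv_gss_single, ContinuousLinearMap.proj_apply,
    Pi.single_eq_of_ne Sum.inl_ne_inr, smul_eq_mul]
  ring

lemma continuous_ddg (i : Fin m) : Continuous (ddg i) := by
  simp only [funext (ddg_eq i), gss]
  fun_prop

lemma integral_eq_zero_of_odd_coord {ι : Type*} [Fintype ι] [DecidableEq ι] (k : ι)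
    {f : (ι → ℝ) → ℝ} (hf : ∀ x, f (Function.update x k (-x k)) = -f x) : ∫ x, f x = 0 := by
  let e : (ι → ℝ) ≃ᵐ (ι → ℝ) :=
    .piCongrRight fun l => if l = k then MeasurableEquiv.neg ℝ else .refl ℝ
  have he : MeasurePreserving e := by
    refine volume_preserving_pi fun l => ?_
    by_cases hl : l = k
    · simpa [hl] using Measure.measurePreserving_neg (volume : Measure ℝ)
    · simpa [hl] using MeasurePreserving.id (volume : Measure ℝ)
  have hupdate : ∀ x, e x = Function.update x k (-x k) := by
    intro x
    ext l
    change (if l = k then MeasurableEquiv.neg ℝ else .refl ℝ) (x l) = _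
    rcases eq_or_ne l k with rfl | hl
    · simp
    · simp [hl]
  have h := he.integral_comp' f
  simp only [hupdate, hf, integral_neg] at h
  linarith

lemma integral_ddg (i : Fin m) : ∫ x, ddg i x = 0 := by
  refine integral_eq_zero_of_odd_coord (Sum.inl i) fun x => ?_
  have hsq : ∀ k, Function.update x (Sum.inl i) (-x (Sum.inl i)) k ^ 2 = x k ^ 2 := fun k => by
    rcases eq_or_ne k (Sum.inl i) with rfl | hk
    · simp
    · simp [hk]
  simp [ddg_eq, gss, hsq]

lemma sq_norm_le_sum_sq {ι : Type*} [Fintype ι] (x : ι → ℝ) : ‖x‖ ^ 2 ≤ ∑ k, x k ^ 2 := by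
  have hsum : 0 ≤ ∑ k, x k ^ 2 := Finset.sum_nonneg fun _ _ => sq_nonneg _
  rw [← Real.le_sqrt (norm_nonneg _) hsum]
  refine (pi_norm_le_iff_of_nonneg (Real.sqrt_nonneg _)).2 fun k => Real.abs_le_sqrt ?_
  exact Finset.single_le_sum (f := fun k => x k ^ 2) (fun _ _ => sq_nonneg _) (Finset.mem_univ k)

lemma gss_le_exp_neg_sq_norm (x : Idx m → ℝ) : gss x ≤ Real.exp (-‖x‖ ^ 2) := by
  refine Real.exp_le_exp.2 ?_
  nlinarith [Real.pi_gt_three, sq_nonneg ‖x‖, sq_norm_le_sum_sq x]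

lemma abs_ddg_le (i : Fin m) (x : Idx m → ℝ) :
    |ddg i x| ≤ 4 * Real.pi ^ 2 * (‖x‖ ^ 2 * Real.exp (-‖x‖ ^ 2)) := by
  have hx : |x (Sum.inl i) * x (Sum.inr i)| ≤ ‖x‖ ^ 2 := by
    rw [abs_mul, sq]
    exact mul_le_mul (norm_le_pi_norm x _) (norm_le_pi_norm x _) (abs_nonneg _) (norm_nonneg _)
  have hg : |gss x| ≤ Real.exp (-‖x‖ ^ 2) := by
    rw [gss, Real.abs_exp]
    exact gss_le_exp_neg_sq_norm x
  rw [ddg_eq, abs_mul, abs_mul _ (gss x), abs_of_pos (by positivity : 0 < 4 * Real.pi ^ 2)]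
  gcongr

lemma one_add_pow_mul_exp_neg_sq_le (n : ℕ) (s : ℝ) :
    (1 + s) ^ (2 * n) * Real.exp (-s ^ 2) ≤ 2 ^ n * n.factorial * Real.exp 1 := by
  have hsq : (1 + s) ^ (2 * n) ≤ 2 ^ n * (1 + s ^ 2) ^ n := by
    rw [pow_mul, ← mul_pow]
    gcongr
    nlinarith [sq_nonneg (1 - s)]
  have hexp : (1 + s ^ 2) ^ n ≤ n.factorial * Real.exp (1 + s ^ 2) := by
    have := Real.pow_div_factorial_le_exp (x := 1 + s ^ 2) (by positivity) n
    rwa [div_le_iff₀ (by positivity), mul_comm] at this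
  calc (1 + s) ^ (2 * n) * Real.exp (-s ^ 2)
      ≤ 2 ^ n * (n.factorial * Real.exp (1 + s ^ 2)) * Real.exp (-s ^ 2) := by
        gcongr
        exact hsq.trans (by gcongr)
    _ = 2 ^ n * n.factorial * (Real.exp (1 + s ^ 2) * Real.exp (-s ^ 2)) := by ring
    _ = 2 ^ n * n.factorial * Real.exp 1 := by rw [← Real.exp_add]; ring_nf

lemma exists_enorm_ddg_le_polyDecay (i : Fin m) (n : ℕ) :
    ∃ C : ℝ≥0, ∀ x : Idx m → ℝ, ‖ddg i x‖ₑ ≤ C * polyDecay (2 * n : ℕ) x := by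
  refine ⟨(4 * Real.pi ^ 2 * (2 ^ (n + 1) * (n + 1).factorial * Real.exp 1)).toNNReal,
    fun x => ?_⟩
  rw [polyDecay, ENNReal.ofNNReal_toNNReal, ← ENNReal.ofReal_mul (by positivity), ← ofReal_norm,
    Real.norm_eq_abs]
  refine ENNReal.ofReal_le_ofReal ?_
  rw [Real.rpow_neg (by positivity), Real.rpow_natCast, ← div_eq_mul_inv,
    le_div_iff₀ (by positivity)]
  calc |ddg i x| * (1 + ‖x‖) ^ (2 * n)
      ≤ 4 * Real.pi ^ 2 * ((1 + ‖x‖) ^ 2 * Real.exp (-‖x‖ ^ 2)) * (1 + ‖x‖) ^ (2 * n) := by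
        gcongr
        refine (abs_ddg_le i x).trans ?_
        gcongr
        linarith
    _ = 4 * Real.pi ^ 2 * ((1 + ‖x‖) ^ (2 * (n + 1)) * Real.exp (-‖x‖ ^ 2)) := by ring
    _ ≤ 4 * Real.pi ^ 2 * (2 ^ (n + 1) * (n + 1).factorial * Real.exp 1) := by
        exact mul_le_mul_of_nonneg_left (one_add_pow_mul_exp_neg_sq_le (n + 1) ‖x‖) (by positivity)

end MixedGaussianDerivative

section CornerProducts

lemma exists_lipschitzWith_prod {ι α : Type*} [Fintype ι] [PseudoEMetricSpace α]
    {f : ι → α → ℝ} (hf : ∀ i, ∃ K, LipschitzWith K (f i)) (hb : ∀ i, ∃ M, ∀ x, ‖f i x‖ ≤ M) :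
    ∃ K, LipschitzWith K fun x => ∏ i, f i x := by
  choose K hK using hf
  choose M hM using hb
  obtain ⟨L, hL⟩ := ContDiffOn.exists_lipschitzOnWith (n := 1)
    (f := fun y : ι → ℝ => ∏ i, y i) (s := Set.univ.pi fun i => closedBall 0 (M i))
    (by fun_prop) one_ne_zero (convex_pi fun _ _ => convex_closedBall 0 _)
    (isCompact_univ_pi fun _ => isCompact_closedBall 0 _)
  refine ⟨L * ∑ i, K i, lipschitzOnWith_univ.1 (hL.comp (f := fun x i => f i x) ?_ ?_)⟩
  · refine lipschitzOnWith_univ.2 fun x y => edist_pi_le_iff.2 fun i => (hK i x y).trans ?_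
    gcongr
    exact Finset.single_le_sum (fun _ _ => zero_le) (Finset.mem_univ i)
  · exact fun x _ i _ => mem_closedBall_zero_iff.2 (hM i x)

variable {m : ℕ} {F : Corner m → (Fin m → ℝ) → ℝ}

lemma lipschitzWith_proj (j : Corner m) : LipschitzWith 1 (proj j) :=
  LipschitzWith.of_edist_le fun x y => edist_pi_le_iff.2 fun _ => edist_le_pi_edist x y _

lemma hasCompactSupport_prod_proj (hF : ∀ j, HasCompactSupport (F j)) :
    HasCompactSupport fun x => ∏ j, F j (proj j x) := by
  have hcont : Continuous fun y : (Fin m → ℝ) × (Fin m → ℝ) => Sum.elim y.1 y.2 :=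
    continuous_pi fun k => by cases k <;> simp only [Sum.elim_inl, Sum.elim_inr] <;> fun_prop
  refine .intro (((hF 0).isCompact.prod (hF 1).isCompact).image hcont) fun x hx => ?_
  have hx' : proj 0 x ∉ tsupport (F 0) ∨ proj 1 x ∉ tsupport (F 1) := by
    by_contra! h
    exact hx ⟨(proj 0 x, proj 1 x), h, by ext k; cases k <;> simp [proj, sel]⟩
  rcases hx' with h | h <;>
    exact Finset.prod_eq_zero (Finset.mem_univ _) (image_eq_zero_of_notMem_tsupport h)

lemma exists_lipschitzWith_prod_proj (hF : ∀ j, ∃ K, LipschitzWith K (F j))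
    (hFc : ∀ j, HasCompactSupport (F j)) :
    ∃ K, LipschitzWith K fun x => ∏ j, F j (proj j x) := by
  refine exists_lipschitzWith_prod (f := fun j x => F j (proj j x)) (fun j => ?_) fun j => ?_
  · obtain ⟨K, hK⟩ := hF j
    exact ⟨K * 1, hK.comp (lipschitzWith_proj j)⟩
  · obtain ⟨K, hK⟩ := hF j
    exact ((hFc j).exists_bound_of_continuous hK.continuous).imp fun M hM x => hM _

lemma integral_mul_dil (Φ φ : (Idx m → ℝ) → ℝ) (t : ℝ) (a : Idx m → ℝ) :
    ∫ x, Φ x * dil t φ (x - a) = scaleAverage volume Φ φ t a := by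
  simp only [dil, mul_left_comm (Φ _), integral_const_mul, scaleAverage,
    finrank_fintype_fun_eq_card, Fintype.card_sum, Fintype.card_fin, two_mul]

end CornerProducts

theorem statement7_general {m : ℕ} (J : Matrix (Idx m) (Fin m) ℝ)
    (hJ : Function.Injective J.mulVec) (u : Idx m → ℝ) (i : Fin m)
    (F : Corner m → (Fin m → ℝ) → ℝ) (hF : ∀ j, ∃ K, LipschitzWith K (F j))
    (hFc : ∀ j, HasCompactSupport (F j)) :
    (∫⁻ t in Set.Ioi (0:ℝ), ENNReal.ofReal t⁻¹ *
      ∫⁻ p : Fin m → ℝ, ENNReal.ofReal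
        |∫ x : Idx m → ℝ, (∏ j, F j (proj j x)) *
          dil t (ddg i) (x - J.mulVec p + t • u)|) < ⊤ := by
  obtain ⟨K, hK⟩ := exists_lipschitzWith_prod_proj hF hFc
  obtain ⟨C, hC⟩ := exists_enorm_ddg_le_polyDecay i (m + 1)
  have hdim : finrank ℝ (Fin m → ℝ) < finrank ℝ (Idx m → ℝ) := by simpa using i.pos
  have hdecay : (finrank ℝ (Idx m → ℝ) : ℝ) + 1 < (2 * (m + 1) : ℕ) := by
    rw [finrank_fintype_fun_eq_card, Fintype.card_sum, Fintype.card_fin]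
    push_cast
    linarith
  have hcentre : ∀ (t : ℝ) (p : Fin m → ℝ) (x : Idx m → ℝ),
      x - J.mulVec p + t • u = x - (J.mulVecLin p + -(t • u)) := fun t p x => by
    rw [mulVecLin_apply]
    abel
  simp only [← Real.norm_eq_abs, ofReal_norm, hcentre, integral_mul_dil]
  exact lintegral_enorm_scaleAverage_lt_top (T := J.mulVecLin) hJ hdim hK
    (hasCompactSupport_prod_proj hFc) (continuous_ddg i).aestronglyMeasurable hC hdecay
    (integral_ddg i) fun t => -(t • u)

/-- Lemma (integrability over the upper half space). -/
theorem statement7 (m : ℕ) (hm : 2 ≤ m) (J : Matrix (Idx m) (Fin m) ℝ)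
    (hJ : Function.Injective J.mulVec) (u : Idx m → ℝ) (i : Fin m)
    (F : Corner m → (Fin m → ℝ) → ℝ)
    (hF : ∀ j, ContDiff ℝ (⊤ : ℕ∞) (F j) ∧ HasCompactSupport (F j)) :
    (∫⁻ t in Set.Ioi (0:ℝ), ENNReal.ofReal t⁻¹ *
      ∫⁻ p : Fin m → ℝ, ENNReal.ofReal
        |∫ x : Idx m → ℝ, (∏ j, F j (proj j x)) *
          dil t (ddg i) (x - J.mulVec p + t • u)|) < ⊤ :=
  statement7_general J hJ u i F
    (fun j => (hF j).1.lipschitzWith_of_hasCompactSupport (hF j).2 (by simp)) fun j => (hF j).2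

end SBL
end
end
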